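/- arXiv:1208.4697 — 3 statements merged into one kernel-verified Lean document; each statement's English description precedes it below -/
import Mathlib

section
/- Let X ⊆ ℝⁿ be an open, order-convex set such that x ∨ y ∈ X and x ∧ y ∈ X for all x, y ∈ X, let f : X → ℝⁿ be a C¹ cooperative irreducible vector field, and let H : X → ℝ be a C¹ first integral for ẋ = f(x) with positive gradient. Fix c ∈ ℝ and assume that for every x ∈ H⁻¹(c) the (unique) maximal solution γₓ of ẋ = f(x) with γₓ(0) = x is defined on all of [0,∞) and remains in X. Then exactly one of the following holds: (a) there is exactly one y ∈ H⁻¹(c) with f(y) = 0, and γₓ(t) → y as t → ∞ for every x ∈ H⁻¹(c); or (b) f has no zero in H⁻¹(c), and for every x ∈ H⁻¹(c) the ω-limit set of γₓ is empty. -/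
open Set Filter Topology

noncomputable section

/-- `f` is a cooperative vector field on `X`: the off-diagonal entries of the
Jacobian are nonnegative. -/
def coopVF {n : ℕ} (f : (Fin n → ℝ) → (Fin n → ℝ)) (X : Set (Fin n → ℝ)) : Prop :=
  ∀ x ∈ X, ∀ i j : Fin n, i ≠ j → 0 ≤ fderiv ℝ f x (Pi.single j 1) i

/-- The Jacobian matrix of `f` at `x`. -/
def jacMat {n : ℕ} (f : (Fin n → ℝ) → (Fin n → ℝ)) (x : Fin n → ℝ) :
    Fin n → Fin n → ℝ :=
  fun i j => fderiv ℝ f x (Pi.single j 1) i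

/-- A matrix is irreducible if for every nonempty proper subset `S` of indices there
are `i ∈ S`, `j ∉ S` with `A i j ≠ 0`. -/
def matIrred {n : ℕ} (A : Fin n → Fin n → ℝ) : Prop :=
  ∀ S : Set (Fin n), S.Nonempty → S ≠ Set.univ → ∃ i ∈ S, ∃ j ∉ S, A i j ≠ 0

/-- `X` is p-convex: the segment joining any two order-related points of `X` lies in `X`. -/
def pconvex {n : ℕ} (X : Set (Fin n → ℝ)) : Prop :=
  ∀ x ∈ X, ∀ y ∈ X, x < y → segment ℝ x y ⊆ X

/-- `x ≪ y`: strict inequality in every coordinate. -/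
def strLt {n : ℕ} (x y : Fin n → ℝ) : Prop := ∀ i, x i < y i

/-- `γ` is a solution of `ẋ = f(x)` on the time interval `I`, with values in `X`. -/
def IsSolOn {n : ℕ} (f : (Fin n → ℝ) → (Fin n → ℝ)) (X : Set (Fin n → ℝ))
    (I : Set ℝ) (γ : ℝ → Fin n → ℝ) : Prop :=
  (∀ t ∈ I, γ t ∈ X) ∧ (∀ t ∈ I, HasDerivWithinAt γ (f (γ t)) I t)

/-- The ω-limit set (within `X`) of a curve `γ`. -/
def omegaSet {n : ℕ} (X : Set (Fin n → ℝ)) (γ : ℝ → Fin n → ℝ) :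
    Set (Fin n → ℝ) :=
  {y | y ∈ X ∧ ∃ t : ℕ → ℝ, Tendsto t atTop atTop ∧
    Tendsto (fun k => γ (t k)) atTop (𝓝 y)}

/-- The α-limit set (within `X`) of a curve `γ`. -/
def alphaSet {n : ℕ} (X : Set (Fin n → ℝ)) (γ : ℝ → Fin n → ℝ) :
    Set (Fin n → ℝ) :=
  {y | y ∈ X ∧ ∃ t : ℕ → ℝ, Tendsto t atTop atBot ∧
    Tendsto (fun k => γ (t k)) atTop (𝓝 y)}

/-- The Euclidean norm on `Fin n → ℝ`. -/
def eunorm {n : ℕ} (v : Fin n → ℝ) : ℝ := Real.sqrt (∑ i, (v i) ^ 2)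

/-- `X` is order-convex: it contains the order interval of any two of its points. -/
def orderConvex {n : ℕ} (X : Set (Fin n → ℝ)) : Prop :=
  ∀ x ∈ X, ∀ y ∈ X, x ≤ y → Set.Icc x y ⊆ X

/-!
For two solutions `u`, `v` the function `t ↦ H (u t ⊔ v t)` is nonincreasing: by cooperativity the
right derivative of `u ⊔ v` is at most `f (u ⊔ v)`, and `H` is increasing and conserved. It is
therefore constant on limit pairs `(p, q)` of `(u, v)` and along the curves of limit pairs issuing
from `(p, q)`, so no component of `f` increases strictly from the active one of `p`, `q` to `p ⊔ q`.
If `u` and `v` lie on one level of `H` and `p ≠ q`, then `p` and `q` are unordered, and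
irreducibility provides a coordinate where `p` and `q` agree but `f p` and `f q` differ; moving
along the limit curves splits it, and induction on the set of coordinates where `p` and `q` agree
gives a contradiction. Hence `p = q`.

With `v` a time shift of `u`, this shows that ω-limit points are equilibria; with `u` and `v`
constant, that a level contains at most one equilibrium `y`. If `v → y` and `u 0` is close to `v 0`,
then `H (u ⊔ v)` stays close to `H y`, which confines `u` to a compact neighbourhood of `y`, and
`u → y` follows. So the basin of `y` is open and closed in the level, which is connected.
-/

section IntegralCurves

variable {E : Type*} [NormedAddCommGroup E] [NormedSpace ℝ E] {f : E → E} {w : ℝ → E} {p : E}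

lemma isIntegralCurveOn_Ici_comp_add (hw : IsIntegralCurveOn w (fun _ ↦ f) (Ici 0)) {t : ℝ}
    (ht : 0 ≤ t) : IsIntegralCurveOn (fun s ↦ w (s + t)) (fun _ ↦ f) (Ici 0) :=
  (hw.comp_add t).mono fun s (hs : 0 ≤ s) ↦ by
    simpa [mem_vadd_set_iff_neg_vadd_mem] using add_nonneg ht hs

lemma exists_norm_sub_sub_smul_le_of_isIntegralCurveOn (hf : ContinuousAt f p) {ε : ℝ}
    (hε : 0 < ε) :
    ∃ δ > 0, ∀ w : ℝ → E, IsIntegralCurveOn w (fun _ ↦ f) (Ici 0) → w 0 ∈ Metric.ball p δ →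
      ∀ s ∈ Icc 0 δ, ‖w s - w 0 - s • f p‖ ≤ ε * s := by
  obtain ⟨R, hR, hball⟩ := Metric.continuousAt_iff.1 hf ε hε
  set δ := R / (1 + ‖f p‖ + ε)
  have hδR : δ * (1 + ‖f p‖ + ε) = R := div_mul_cancel₀ R (by positivity)
  refine ⟨δ, by positivity, fun w hw hw0 ↦ ?_⟩
  have hmem : ∀ s ∈ Icc 0 δ, ‖w s - w 0 - s • f p‖ = ε * s → dist (w s) p < R := by
    intro s hs heq
    calc dist (w s) p = ‖(w s - w 0 - s • f p) + (w 0 - p) + s • f p‖ := by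
          rw [dist_eq_norm]; congr 1; abel
      _ ≤ ε * s + ‖w 0 - p‖ + s * ‖f p‖ := by
          grw [norm_add₃_le, heq, norm_smul, Real.norm_of_nonneg hs.1]
      _ < ε * δ + δ + δ * ‖f p‖ := by
          exact add_lt_add_of_lt_of_le
            (add_lt_add_of_le_of_lt (by gcongr; exact hs.2) (mem_ball_iff_norm.1 hw0))
            (by gcongr; exact hs.2)
      _ = R := by rw [← hδR]; ring
  refine image_norm_le_of_norm_deriv_right_lt_deriv_boundary
    (f' := fun s ↦ f (w s) - f p) (B' := fun _ ↦ ε) ?_ (fun s hs ↦ ?_) (by simp)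
    (fun s ↦ by simpa using (hasDerivAt_id s).const_mul ε) fun s hs heq ↦ ?_
  · exact ((hw.continuousOn.mono Icc_subset_Ici_self).sub continuousOn_const).sub (by fun_prop)
  · have hws := (hw s hs.1).mono (Ici_subset_Ici.2 hs.1)
    have h := (hws.sub_const (w 0)).sub ((hasDerivWithinAt_id s (Ici s)).smul_const (f p))
    rwa [one_smul] at h
  · rw [← dist_eq_norm]
    exact hball (hmem s (Ico_subset_Icc_self hs) heq)

-- `P s` is the limit of `w (t + s)` along one fixed ultrafilter in `t` with `w t → p`, which
-- replaces the flow through `p`.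
lemma exists_hasDerivWithinAt_mapClusterPt [ProperSpace E] (hf : ContinuousAt f p)
    (hw : IsIntegralCurveOn w (fun _ ↦ f) (Ici 0)) (hp : MapClusterPt p atTop w) :
    ∃ P : ℝ → E, P 0 = p ∧ HasDerivWithinAt P (f p) (Ici 0) 0 ∧
      ∀ᶠ s in 𝓝[≥] 0, MapClusterPt (p, P s) atTop fun t ↦ (w t, w (t + s)) := by
  obtain ⟨U, hU, hUp⟩ := mapClusterPt_iff_ultrafilter.1 hp
  have hest : ∀ ε > 0, ∃ δ > 0, ∀ s ∈ Icc 0 δ,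
      ∀ᶠ t in (U : Filter ℝ), ‖w (t + s) - w t - s • f p‖ ≤ ε * s := by
    intro ε hε
    obtain ⟨δ, hδ, hδw⟩ := exists_norm_sub_sub_smul_le_of_isIntegralCurveOn hf hε
    refine ⟨δ, hδ, fun s hs ↦ ?_⟩
    filter_upwards [hU (eventually_ge_atTop 0), hUp (Metric.ball_mem_nhds p hδ)] with t ht htp
    simpa [add_comm s] using
      hδw _ (isIntegralCurveOn_Ici_comp_add hw ht) (by simpa using htp) s hs
  obtain ⟨δ, hδ, hδw⟩ := hest 1 one_pos
  have hlim : ∀ s ∈ Icc 0 δ, ∃ x, Tendsto (fun t ↦ w (t + s)) U (𝓝 x) := by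
    intro s hs
    have hdiff : ∀ᶠ t in (U : Filter ℝ),
        w (t + s) - w t - s • f p ∈ Metric.closedBall 0 (1 * s) := by
      simpa using hδw s hs
    obtain ⟨d, -, hd⟩ := (isCompact_closedBall (0 : E) (1 * s)).ultrafilter_le_nhds
      (U.map fun t ↦ w (t + s) - w t - s • f p) (le_principal_iff.2 hdiff)
    have hd : Tendsto (fun t ↦ w (t + s) - w t - s • f p) U (𝓝 d) := hd
    exact ⟨_, by simpa using (hd.add_const (s • f p)).add hUp⟩
  choose! P hP using hlim
  have hP0 : P 0 = p := tendsto_nhds_unique (hP 0 ⟨le_rfl, hδ.le⟩) (by simpa using hUp)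
  refine ⟨P, hP0, hasDerivWithinAt_iff_isLittleO.2 (Asymptotics.isLittleO_iff.2 fun ε hε ↦ ?_), ?_⟩
  · obtain ⟨η, hη, hηw⟩ := hest ε hε
    filter_upwards [Icc_mem_nhdsGE (lt_min hδ hη)] with s hs
    have hlim : Tendsto (fun t ↦ w (t + s) - w t - s • f p) U (𝓝 (P s - p - s • f p)) :=
      ((hP s ⟨hs.1, hs.2.trans (min_le_left _ _)⟩).sub hUp).sub_const _
    simpa [hP0, abs_of_nonneg hs.1] using
      le_of_tendsto hlim.norm (hηw s ⟨hs.1, hs.2.trans (min_le_right _ _)⟩)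
  · filter_upwards [Icc_mem_nhdsGE hδ] with s hs
    exact mapClusterPt_iff_ultrafilter.2 ⟨U, hU, hUp.prodMk_nhds (hP s hs)⟩

lemma exists_hasDerivWithinAt_mapClusterPt_prodMk [ProperSpace E] {u v : ℝ → E} {q : E}
    (hp : ContinuousAt f p) (hq : ContinuousAt f q) (hu : IsIntegralCurveOn u (fun _ ↦ f) (Ici 0))
    (hv : IsIntegralCurveOn v (fun _ ↦ f) (Ici 0))
    (hpq : MapClusterPt (p, q) atTop fun t ↦ (u t, v t)) :
    ∃ P Q : ℝ → E, P 0 = p ∧ Q 0 = q ∧ HasDerivWithinAt P (f p) (Ici 0) 0 ∧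
      HasDerivWithinAt Q (f q) (Ici 0) 0 ∧
      ∀ᶠ s in 𝓝[≥] 0, MapClusterPt (P s, Q s) atTop fun t ↦ (u t, v t) := by
  obtain ⟨R, hR0, hR, hcluster⟩ := exists_hasDerivWithinAt_mapClusterPt
    (f := Prod.map f f) (hp.prodMap hq) (fun t ht ↦ (hu t ht).prodMk (hv t ht)) hpq
  refine ⟨fun s ↦ (R s).1, fun s ↦ (R s).2, congrArg Prod.fst hR0, congrArg Prod.snd hR0,
    hR.fst, hR.snd, hcluster.mono fun s hs ↦ ?_⟩
  exact (hs.continuousAt_comp continuousAt_snd).of_comp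
    (tendsto_atTop_add_const_right _ s tendsto_id)

end IntegralCurves

instance continuousSup_pi {ι : Type*} {L : ι → Type*} [∀ i, TopologicalSpace (L i)]
    [∀ i, Max (L i)] [∀ i, ContinuousSup (L i)] : ContinuousSup (∀ i, L i) :=
  ⟨continuous_pi fun i ↦ ((continuous_apply i).comp continuous_fst).sup
    ((continuous_apply i).comp continuous_snd)⟩

section RightDerivatives

lemma exists_hasDerivWithinAt_max {a b : ℝ → ℝ} {a' b' t : ℝ}
    (ha : HasDerivWithinAt a a' (Ici t) t) (hb : HasDerivWithinAt b b' (Ici t) t) :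
    ∃ d, HasDerivWithinAt (fun s ↦ max (a s) (b s)) d (Ici t) t ∧
      (d = a' ∧ b t ≤ a t ∨ d = b' ∧ a t ≤ b t) := by
  rcases lt_trichotomy (a t) (b t) with hlt | heq | hgt
  · refine ⟨b', hb.congr_of_eventuallyEq ?_ (max_eq_right hlt.le), .inr ⟨rfl, hlt.le⟩⟩
    filter_upwards [ha.continuousWithinAt.eventually_lt hb.continuousWithinAt hlt] with s hs
    exact max_eq_right hs.le
  · refine ⟨max a' b', ?_, (max_choice a' b').imp (⟨·, heq.ge⟩) (⟨·, heq.le⟩)⟩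
    rw [hasDerivWithinAt_iff_tendsto_slope, Ici_sdiff_left] at ha hb ⊢
    refine (ha.max hb).congr' (eventually_mem_nhdsWithin.mono fun s hs ↦ ?_)
    have hs : 0 ≤ s - t := (sub_pos.2 hs).le
    simp only [slope_def_field, heq, max_self, max_div_div_right hs, max_sub_sub_right]
  · refine ⟨a', ha.congr_of_eventuallyEq ?_ (max_eq_left hgt.le), .inl ⟨rfl, hgt.le⟩⟩
    filter_upwards [hb.continuousWithinAt.eventually_lt ha.continuousWithinAt hgt] with s hs
    exact max_eq_left hs.le

lemma exists_hasDerivWithinAt_sup {ι : Type*} [Finite ι] {u v : ℝ → ι → ℝ} {u' v' : ι → ℝ} {t : ℝ}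
    (hu : HasDerivWithinAt u u' (Ici t) t) (hv : HasDerivWithinAt v v' (Ici t) t) :
    ∃ m, HasDerivWithinAt (fun s ↦ u s ⊔ v s) m (Ici t) t ∧
      ∀ i, m i = u' i ∧ v t i ≤ u t i ∨ m i = v' i ∧ u t i ≤ v t i := by
  cases nonempty_fintype ι
  choose m hm hmi using fun i ↦
    exists_hasDerivWithinAt_max (hasDerivWithinAt_pi.1 hu i) (hasDerivWithinAt_pi.1 hv i)
  exact ⟨m, hasDerivWithinAt_pi.2 hm, hmi⟩

lemma antitoneOn_Ici_of_hasDerivWithinAt_nonpos {V : ℝ → ℝ} {a : ℝ} (hV : ContinuousOn V (Ici a))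
    (hV' : ∀ t ∈ Ici a, ∃ d ≤ 0, HasDerivWithinAt V d (Ici t) t) : AntitoneOn V (Ici a) := by
  choose! V' hV'0 hV' using hV'
  intro s hs t _ hst
  have hsub : Icc s t ⊆ Ici a := fun r hr ↦ le_trans hs hr.1
  exact image_le_of_deriv_right_le_deriv_boundary (B := fun _ ↦ V s) (hV.mono hsub)
    (fun r hr ↦ hV' r (hsub (Ico_subset_Icc_self hr))) le_rfl continuousOn_const
    (fun r _ ↦ hasDerivWithinAt_const r (Ici r) (V s))
    (fun r hr ↦ hV'0 r (hsub (Ico_subset_Icc_self hr))) (right_mem_Icc.2 hst)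

lemma eq_of_mapClusterPt_of_antitoneOn {V : ℝ → ℝ} {a x y : ℝ} (hV : AntitoneOn V (Ici a))
    (hx : MapClusterPt x atTop V) (hy : MapClusterPt y atTop V) : x = y := by
  have hle : ∀ {x y}, MapClusterPt x atTop V → MapClusterPt y atTop V → x ≤ y := by
    intro x y hx hy
    obtain ⟨U, hU, hUx⟩ := mapClusterPt_iff_ultrafilter.1 hx
    obtain ⟨U', hU', hUy⟩ := mapClusterPt_iff_ultrafilter.1 hy
    refine ge_of_tendsto hUy (hU' ((eventually_ge_atTop a).mono fun s hs ↦ ?_))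
    exact le_of_tendsto hUx (hU ((eventually_ge_atTop s).mono fun t ht ↦ hV hs (hs.trans ht) ht))
  exact (hle hx hy).antisymm (hle hy hx)

end RightDerivatives

section LinearForms

variable {ι : Type*} [DecidableEq ι]

lemma map_eq_sum_smul_map_single [Fintype ι] {F : Type*} [NormedAddCommGroup F] [NormedSpace ℝ F]
    (L : (ι → ℝ) →L[ℝ] F) (v : ι → ℝ) : L v = ∑ j, v j • L (Pi.single j 1) := by
  conv_lhs => rw [pi_eq_sum_univ' v]
  simp only [map_sum, map_smul]

lemma strictMono_of_forall_map_single_pos [Finite ι] {L : (ι → ℝ) →L[ℝ] ℝ}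
    (hL : ∀ i, 0 < L (Pi.single i 1)) : StrictMono L := by
  cases nonempty_fintype ι
  intro v w hvw
  obtain ⟨hle, i, hi⟩ := Pi.lt_def.1 hvw
  rw [map_eq_sum_smul_map_single L v, map_eq_sum_smul_map_single L w]
  exact Finset.sum_lt_sum (fun j _ ↦ smul_le_smul_of_nonneg_right (hle j) (hL j).le)
    ⟨i, Finset.mem_univ i, smul_lt_smul_of_pos_right hi (hL i)⟩

end LinearForms

section Cooperative

variable {n : ℕ} {X : Set (Fin n → ℝ)} {f : (Fin n → ℝ) → Fin n → ℝ} {x z : Fin n → ℝ} {i j : Fin n}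

/-- The Müller–Kamke condition: raising some coordinates of a point cannot decrease the components
of `f` at the coordinates left unchanged. -/
def QuasimonotoneOn {ι : Type*} (f : (ι → ℝ) → ι → ℝ) (X : Set (ι → ℝ)) : Prop :=
  ∀ x ∈ X, ∀ z ∈ X, x ≤ z → ∀ i, x i = z i → f x i ≤ f z i

lemma fderiv_apply_eq_sum_jacMat (f : (Fin n → ℝ) → Fin n → ℝ) (x v : Fin n → ℝ) (i : Fin n) :
    fderiv ℝ f x v i = ∑ j, jacMat f x i j * v j := by
  rw [map_eq_sum_smul_map_single, Finset.sum_apply]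
  simp only [jacMat, Pi.smul_apply, smul_eq_mul, mul_comm]

lemma jacMat_mul_nonneg (hcoop : coopVF f X) (hx : x ∈ X) {v : Fin n → ℝ} (hv : 0 ≤ v)
    (hi : v i = 0) (j : Fin n) : 0 ≤ jacMat f x i j * v j := by
  rcases eq_or_ne i j with rfl | hij
  · rw [hi, mul_zero]
  · exact mul_nonneg (hcoop x hx i j hij) (hv j)

lemma quasimonotoneOn_of_coopVF (hX : IsOpen X) (hoc : OrdConnected X)
    (hf : DifferentiableOn ℝ f X) (hcoop : coopVF f X) : QuasimonotoneOn f X := by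
  intro x hx z hz hxz i hi
  have hIcc : Icc x z ⊆ X := hoc.out hx hz
  have hderiv : ∀ y ∈ Icc x z, HasFDerivWithinAt (fun y ↦ f y i)
      ((ContinuousLinearMap.proj i).comp (fderiv ℝ f y)) (Icc x z) y := fun y hy ↦
    hasFDerivWithinAt_pi'.1
      (hf.differentiableAt (hX.mem_nhds (hIcc hy))).hasFDerivAt.hasFDerivWithinAt i
  obtain ⟨w, hw, hwxz⟩ := domain_mvt hderiv (convex_Icc x z) (left_mem_Icc.2 hxz)
    (right_mem_Icc.2 hxz)
  have hwX : w ∈ X := hIcc (segment_subset_Icc hxz hw)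
  rw [← sub_nonneg, hwxz]
  change 0 ≤ fderiv ℝ f w (z - x) i
  rw [fderiv_apply_eq_sum_jacMat]
  exact Finset.sum_nonneg fun j _ ↦
    jacMat_mul_nonneg hcoop hwX (sub_nonneg.2 hxz) (by simp [hi]) j

lemma apply_lt_apply_of_jacMat_ne_zero (hX : IsOpen X) (hoc : OrdConnected X)
    (hf : DifferentiableOn ℝ f X) (hcoop : coopVF f X) (hx : x ∈ X) (hz : z ∈ X) (hxz : x ≤ z)
    (hi : x i = z i) (hij : jacMat f x i j ≠ 0) (hj : x j < z j) : f x i < f z i := by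
  set v := z - x with hv
  have hv0 : 0 ≤ v := sub_nonneg.2 hxz
  have hvi : v i = 0 := by simp [hv, hi]
  have hvj : 0 < v j := sub_pos.2 hj
  have hpos : 0 < fderiv ℝ f x v i := by
    rw [fderiv_apply_eq_sum_jacMat]
    exact Finset.sum_pos' (fun k _ ↦ jacMat_mul_nonneg hcoop hx hv0 hvi k) ⟨j, Finset.mem_univ j,
      (jacMat_mul_nonneg hcoop hx hv0 hvi j).lt_of_ne' (mul_ne_zero hij hvj.ne')⟩
  have hderiv : HasDerivAt (fun s : ℝ ↦ f (x + s • v) i) (fderiv ℝ f x v i) 0 := by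
    have hline : HasDerivAt (fun s : ℝ ↦ x + s • v) v 0 := by
      simpa using ((hasDerivAt_id (0 : ℝ)).smul_const v).const_add x
    exact hasDerivAt_pi.1 ((hf.differentiableAt
      (hX.mem_nhds hx)).hasFDerivAt.comp_hasDerivAt_of_eq 0 hline (by simp)) i
  obtain ⟨s, hne, hs0, hs1⟩ := (((hderiv.eventually_ne (c := f x i) hpos.ne').filter_mono
    (nhdsGT_le_nhdsNE 0)).and (Ioo_mem_nhdsGT one_pos)).exists
  have hxs : x ≤ x + s • v := le_add_of_nonneg_right (smul_nonneg hs0.le hv0)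
  have hsz : x + s • v ≤ z := by
    simpa [hv] using add_le_add_right (smul_le_of_le_one_left hv0 hs1.le) x
  have hsX : x + s • v ∈ X := hoc.out hx hz ⟨hxs, hsz⟩
  have hkamke := quasimonotoneOn_of_coopVF hX hoc hf hcoop
  exact ((hkamke x hx _ hsX hxs i (by simp [hvi])).lt_of_ne' hne).trans_le
    (hkamke _ hsX z hz hsz i (by simp [hvi, hi]))

/-- A cooperative vector field `f` on a domain `X` in which the componentwise maximum of two
solutions makes sense. -/
structure IsCooperativeSystem {n : ℕ} (f : (Fin n → ℝ) → Fin n → ℝ) (X : Set (Fin n → ℝ)) :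
    Prop where
  isOpen : IsOpen X
  ordConnected : OrdConnected X
  supClosed : SupClosed X
  differentiableOn : DifferentiableOn ℝ f X
  cooperative : coopVF f X

namespace IsCooperativeSystem

variable {p q : Fin n → ℝ}

lemma continuousAt (hf : IsCooperativeSystem f X) (hx : x ∈ X) : ContinuousAt f x :=
  (hf.differentiableOn.differentiableAt (hf.isOpen.mem_nhds hx)).continuousAt

lemma quasimonotoneOn (hf : IsCooperativeSystem f X) : QuasimonotoneOn f X :=
  quasimonotoneOn_of_coopVF hf.isOpen hf.ordConnected hf.differentiableOn hf.cooperative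

lemma exists_apply_lt_apply_sup (hf : IsCooperativeSystem f X) (hp : p ∈ X) (hq : q ∈ X)
    (hirr : matIrred (jacMat f p)) (hpq : ¬p ≤ q) (hqp : ¬q ≤ p) :
    ∃ i, q i ≤ p i ∧ f p i < f (p ⊔ q) i := by
  obtain ⟨i₀, hi₀⟩ := not_forall.1 hpq
  have hne : {i | q i ≤ p i} ≠ univ := fun h ↦ hqp fun i ↦ h.ge (mem_univ i)
  obtain ⟨i, hi, j, hj, hij⟩ := hirr {i | q i ≤ p i} ⟨i₀, (not_le.1 hi₀).le⟩ hne
  exact ⟨i, hi, apply_lt_apply_of_jacMat_ne_zero hf.isOpen hf.ordConnected hf.differentiableOn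
    hf.cooperative hp (hf.supClosed hp hq) le_sup_left (sup_eq_left.2 hi).symm hij
    (lt_sup_of_lt_right (not_le.1 hj))⟩

end IsCooperativeSystem

end Cooperative

section FirstIntegral

variable {n : ℕ} {X : Set (Fin n → ℝ)} {f : (Fin n → ℝ) → Fin n → ℝ} {H : (Fin n → ℝ) → ℝ}
  {u v : ℝ → Fin n → ℝ} {x p q p' q' : Fin n → ℝ} {t : ℝ}

/-- A first integral of `ẋ = f(x)` on `X` with positive gradient. -/
structure IsPositiveFirstIntegral {n : ℕ} (H : (Fin n → ℝ) → ℝ) (f : (Fin n → ℝ) → Fin n → ℝ)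
    (X : Set (Fin n → ℝ)) : Prop where
  differentiableOn : DifferentiableOn ℝ H X
  fderiv_apply_eq_zero : ∀ x ∈ X, fderiv ℝ H x (f x) = 0
  fderiv_single_pos : ∀ x ∈ X, ∀ i, 0 < fderiv ℝ H x (Pi.single i 1)

namespace IsPositiveFirstIntegral

lemma hasFDerivAt (hH : IsPositiveFirstIntegral H f X) (hX : IsOpen X) (hx : x ∈ X) :
    HasFDerivAt H (fderiv ℝ H x) x :=
  (hH.differentiableOn.differentiableAt (hX.mem_nhds hx)).hasFDerivAt

lemma strictMono_fderiv (hH : IsPositiveFirstIntegral H f X) (hx : x ∈ X) :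
    StrictMono (fderiv ℝ H x) :=
  strictMono_of_forall_map_single_pos (hH.fderiv_single_pos x hx)

lemma strictMonoOn (hH : IsPositiveFirstIntegral H f X) (hX : IsOpen X) (hoc : OrdConnected X) :
    StrictMonoOn H X := by
  intro x hx y hy hxy
  have hIcc : Icc x y ⊆ X := hoc.out hx hy
  obtain ⟨w, hw, hwxy⟩ := domain_mvt
    (fun z hz ↦ (hH.hasFDerivAt hX (hIcc hz)).hasFDerivWithinAt) (convex_Icc x y)
    (left_mem_Icc.2 hxy.le) (right_mem_Icc.2 hxy.le)
  rw [← sub_pos, hwxy, ← map_zero (fderiv ℝ H w)]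
  exact hH.strictMono_fderiv (hIcc (segment_subset_Icc hxy.le hw)) (sub_pos.2 hxy)

lemma apply_eq_of_isSolOn (hH : IsPositiveFirstIntegral H f X) (hX : IsOpen X)
    (hu : IsSolOn f X (Ici 0) u) (ht : 0 ≤ t) : H (u t) = H (u 0) := by
  refine constant_of_has_deriv_right_zero (f := H ∘ u)
    (hH.differentiableOn.continuousOn.comp
      ((HasDerivWithinAt.continuousOn hu.2).mono Icc_subset_Ici_self) fun s hs ↦ hu.1 s hs.1)
    (fun s hs ↦ ?_) t (right_mem_Icc.2 ht)
  simpa only [hH.fderiv_apply_eq_zero _ (hu.1 s hs.1)] using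
    (hH.hasFDerivAt hX (hu.1 s hs.1)).comp_hasDerivWithinAt s
      ((hu.2 s hs.1).mono (Ici_subset_Ici.2 hs.1))

end IsPositiveFirstIntegral

lemma exists_le_hasDerivWithinAt_sup (hf : QuasimonotoneOn f X) (hX : SupClosed X)
    (hu : HasDerivWithinAt u (f (u t)) (Ici t) t) (hv : HasDerivWithinAt v (f (v t)) (Ici t) t)
    (hut : u t ∈ X) (hvt : v t ∈ X) :
    ∃ m ≤ f (u t ⊔ v t), HasDerivWithinAt (fun s ↦ u s ⊔ v s) m (Ici t) t ∧
      ∀ i, m i = f (u t) i ∧ v t i ≤ u t i ∨ m i = f (v t) i ∧ u t i ≤ v t i := by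
  obtain ⟨m, hm, hmi⟩ := exists_hasDerivWithinAt_sup hu hv
  refine ⟨m, fun i ↦ ?_, hm, hmi⟩
  rcases hmi i with ⟨hi, hle⟩ | ⟨hi, hle⟩
  · exact hi.trans_le (hf _ hut _ (hX hut hvt) le_sup_left i (sup_eq_left.2 hle).symm)
  · exact hi.trans_le (hf _ hvt _ (hX hut hvt) le_sup_right i (sup_eq_right.2 hle).symm)

namespace IsPositiveFirstIntegral

lemma antitoneOn_apply_sup (hH : IsPositiveFirstIntegral H f X) (hf : IsCooperativeSystem f X)
    (hu : IsSolOn f X (Ici 0) u) (hv : IsSolOn f X (Ici 0) v) :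
    AntitoneOn (fun t ↦ H (u t ⊔ v t)) (Ici 0) := by
  have hsup : ∀ t ∈ Ici (0 : ℝ), u t ⊔ v t ∈ X := fun t ht ↦ hf.supClosed (hu.1 t ht) (hv.1 t ht)
  refine antitoneOn_Ici_of_hasDerivWithinAt_nonpos (hH.differentiableOn.continuousOn.comp
    ((HasDerivWithinAt.continuousOn hu.2).sup (HasDerivWithinAt.continuousOn hv.2)) hsup)
    fun t ht ↦ ?_
  obtain ⟨m, hm, hmderiv, -⟩ := exists_le_hasDerivWithinAt_sup hf.quasimonotoneOn hf.supClosed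
    ((hu.2 t ht).mono (Ici_subset_Ici.2 ht)) ((hv.2 t ht).mono (Ici_subset_Ici.2 ht))
    (hu.1 t ht) (hv.1 t ht)
  refine ⟨_, ?_, (hH.hasFDerivAt hf.isOpen (hsup t ht)).comp_hasDerivWithinAt t hmderiv⟩
  exact ((hH.strictMono_fderiv (hsup t ht)).monotone hm).trans_eq
    (hH.fderiv_apply_eq_zero _ (hsup t ht))

lemma apply_sup_eq_of_mapClusterPt (hH : IsPositiveFirstIntegral H f X)
    (hf : IsCooperativeSystem f X) (hu : IsSolOn f X (Ici 0) u) (hv : IsSolOn f X (Ici 0) v)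
    (hpq : p ⊔ q ∈ X) (hpq' : p' ⊔ q' ∈ X)
    (hp : MapClusterPt (p, q) atTop fun t ↦ (u t, v t))
    (hp' : MapClusterPt (p', q') atTop fun t ↦ (u t, v t)) : H (p ⊔ q) = H (p' ⊔ q') := by
  have hcluster : ∀ {p q}, p ⊔ q ∈ X → MapClusterPt (p, q) atTop (fun t ↦ (u t, v t)) →
      MapClusterPt (H (p ⊔ q)) atTop fun t ↦ H (u t ⊔ v t) := fun hX hpq ↦
    hpq.continuousAt_comp (f := fun z ↦ H (z.1 ⊔ z.2))
      (ContinuousAt.comp (g := H) (hH.hasFDerivAt hf.isOpen hX).continuousAt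
        (continuous_fst.sup continuous_snd).continuousAt)
  exact eq_of_mapClusterPt_of_antitoneOn (hH.antitoneOn_apply_sup hf hu hv) (hcluster hpq hp)
    (hcluster hpq' hp')

lemma apply_eq_of_mapClusterPt (hH : IsPositiveFirstIntegral H f X) (hX : IsOpen X)
    (hu : IsSolOn f X (Ici 0) u) (hpX : p ∈ X) (hp : MapClusterPt p atTop u) : H p = H (u 0) := by
  obtain ⟨U, hU, hUp⟩ := mapClusterPt_iff_ultrafilter.1 hp
  refine tendsto_nhds_unique ((hH.hasFDerivAt hX hpX).continuousAt.tendsto.comp hUp)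
    (tendsto_const_nhds.congr' ?_)
  filter_upwards [hU (eventually_ge_atTop 0)] with t ht
  exact (hH.apply_eq_of_isSolOn hX hu ht).symm

lemma apply_eq_apply_sup_of_mapClusterPt (hH : IsPositiveFirstIntegral H f X)
    (hf : IsCooperativeSystem f X) (hu : IsSolOn f X (Ici 0) u) (hv : IsSolOn f X (Ici 0) v)
    (hpX : p ∈ X) (hqX : q ∈ X) (hpq : MapClusterPt (p, q) atTop fun t ↦ (u t, v t)) (i : Fin n) :
    f p i = f (p ⊔ q) i ∧ q i ≤ p i ∨ f q i = f (p ⊔ q) i ∧ p i ≤ q i := by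
  obtain ⟨P, Q, rfl, rfl, hP, hQ, hcluster⟩ := exists_hasDerivWithinAt_mapClusterPt_prodMk
    (hf.continuousAt hpX) (hf.continuousAt hqX) hu.2 hv.2 hpq
  have hsupX : P 0 ⊔ Q 0 ∈ X := hf.supClosed hpX hqX
  obtain ⟨m, hm, hmderiv, hmi⟩ :=
    exists_le_hasDerivWithinAt_sup hf.quasimonotoneOn hf.supClosed hP hQ hpX hqX
  have hconst : (fun s ↦ H (P s ⊔ Q s)) =ᶠ[𝓝[≥] 0] fun _ ↦ H (P 0 ⊔ Q 0) := by
    filter_upwards [hcluster, hmderiv.continuousWithinAt (hf.isOpen.mem_nhds hsupX)] with s hs hsX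
    exact hH.apply_sup_eq_of_mapClusterPt hf hu hv hsX hsupX hs hpq
  have hHm : fderiv ℝ H (P 0 ⊔ Q 0) m = 0 := (uniqueDiffWithinAt_Ici 0).eq_deriv _
    ((hH.hasFDerivAt hf.isOpen hsupX).comp_hasDerivWithinAt 0 hmderiv)
    ((hasDerivWithinAt_const 0 (Ici 0) _).congr_of_eventuallyEq hconst rfl)
  have hm_eq : m = f (P 0 ⊔ Q 0) := hm.eq_of_not_lt fun hlt ↦
    (hH.strictMono_fderiv hsupX hlt).ne (hHm.trans (hH.fderiv_apply_eq_zero _ hsupX).symm)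
  simpa only [hm_eq, eq_comm] using hmi i

end IsPositiveFirstIntegral

lemma exists_mapClusterPt_ssubset (hX : IsOpen X) (hf : ContinuousOn f X)
    (hu : IsSolOn f X (Ici 0) u) (hv : IsSolOn f X (Ici 0) v) (hpX : p ∈ X) (hqX : q ∈ X)
    (hpq : MapClusterPt (p, q) atTop fun t ↦ (u t, v t)) {i : Fin n} (hi : p i = q i)
    (hfi : f p i ≠ f q i) :
    ∃ p' ∈ X, ∃ q' ∈ X, MapClusterPt (p', q') atTop (fun t ↦ (u t, v t)) ∧
      {j | p' j = q' j} ⊂ {j | p j = q j} := by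
  obtain ⟨P, Q, rfl, rfl, hP, hQ, hcluster⟩ := exists_hasDerivWithinAt_mapClusterPt_prodMk
    (hf.continuousAt (hX.mem_nhds hpX)) (hf.continuousAt (hX.mem_nhds hqX)) hu.2 hv.2 hpq
  have hPQ : ∀ j, HasDerivWithinAt (fun s ↦ P s j - Q s j) (f (P 0) j - f (Q 0) j) (Ici 0) 0 :=
    fun j ↦ (hasDerivWithinAt_pi.1 hP j).sub (hasDerivWithinAt_pi.1 hQ j)
  have hkeep : ∀ᶠ s in 𝓝[≥] 0, ∀ j, P 0 j ≠ Q 0 j → P s j - Q s j ≠ 0 :=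
    eventually_all.2 fun j ↦ eventually_imp_distrib_left.2 fun hj ↦
      (hPQ j).continuousWithinAt.eventually_ne (sub_ne_zero.2 hj)
  have hsplit : ∀ᶠ s in 𝓝[>] 0, P s i - Q s i ≠ 0 := by
    simpa only [Ici_sdiff_left] using (hPQ i).eventually_ne (sub_ne_zero.2 hfi)
  have hPX : ∀ᶠ s in 𝓝[≥] 0, P s ∈ X := hP.continuousWithinAt (hX.mem_nhds hpX)
  have hQX : ∀ᶠ s in 𝓝[≥] 0, Q s ∈ X := hQ.continuousWithinAt (hX.mem_nhds hqX)
  obtain ⟨s, ⟨hs, hkeep, hPX, hQX⟩, hsplit⟩ :=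
    (((hcluster.and <| hkeep.and <| hPX.and hQX).filter_mono
      (nhdsWithin_mono 0 Ioi_subset_Ici_self)).and hsplit).exists
  refine ⟨P s, hPX, Q s, hQX, hs, fun j hj ↦ ?_, fun h ↦ hsplit (sub_eq_zero.2 (h hi))⟩
  exact not_imp_not.1 (hkeep j) (sub_eq_zero.2 hj)

namespace IsPositiveFirstIntegral

lemma eq_of_mapClusterPt (hH : IsPositiveFirstIntegral H f X)
    (hf : IsCooperativeSystem f X) (hirr : ∀ x ∈ X, matIrred (jacMat f x))
    (hu : IsSolOn f X (Ici 0) u) (hv : IsSolOn f X (Ici 0) v) (hHuv : H (u 0) = H (v 0))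
    (hpX : p ∈ X) (hqX : q ∈ X) (hpq : MapClusterPt (p, q) atTop fun t ↦ (u t, v t)) : p = q := by
  induction hS : {j | p j = q j} using WellFoundedLT.induction generalizing p q with
  | ind S ih =>
  subst hS
  by_contra hne
  have hHpq : H p = H q := by
    rw [hH.apply_eq_of_mapClusterPt hf.isOpen hu hpX (hpq.continuousAt_comp continuousAt_fst),
      hH.apply_eq_of_mapClusterPt hf.isOpen hv hqX (hpq.continuousAt_comp continuousAt_snd), hHuv]
  have hmono := hH.strictMonoOn hf.isOpen hf.ordConnected
  obtain ⟨i, hqp, hlt⟩ := hf.exists_apply_lt_apply_sup hpX hqX (hirr p hpX)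
    (fun hle ↦ (hmono hpX hqX (hle.lt_of_ne hne)).ne hHpq)
    (fun hle ↦ (hmono hqX hpX (hle.lt_of_ne' hne)).ne' hHpq)
  obtain ⟨hfq, hpq_le⟩ := (hH.apply_eq_apply_sup_of_mapClusterPt hf hu hv hpX hqX hpq
    i).resolve_left fun h ↦ hlt.ne h.1
  obtain ⟨p', hpX', q', hqX', hpq', hss⟩ := exists_mapClusterPt_ssubset hf.isOpen
    hf.differentiableOn.continuousOn hu hv hpX hqX hpq (hpq_le.antisymm hqp)
    (hlt.trans_eq hfq.symm).ne
  obtain rfl := ih _ hss hpX' hqX' hpq' rfl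
  exact hss.not_subset fun j _ ↦ rfl

lemma apply_eq_zero_of_mapClusterPt (hH : IsPositiveFirstIntegral H f X)
    (hf : IsCooperativeSystem f X) (hirr : ∀ x ∈ X, matIrred (jacMat f x))
    (hu : IsSolOn f X (Ici 0) u) (hpX : p ∈ X) (hp : MapClusterPt p atTop u) : f p = 0 := by
  obtain ⟨P, rfl, hP, hcluster⟩ :=
    exists_hasDerivWithinAt_mapClusterPt (hf.continuousAt hpX) hu.2 hp
  have hconst : P =ᶠ[𝓝[≥] 0] fun _ ↦ P 0 := by
    filter_upwards [hcluster, hP.continuousWithinAt (hf.isOpen.mem_nhds hpX),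
      self_mem_nhdsWithin] with s hs hsX (hs0 : 0 ≤ s)
    have hshift : IsSolOn f X (Ici 0) fun t ↦ u (t + s) :=
      ⟨fun t ht ↦ hu.1 _ (add_nonneg ht hs0), isIntegralCurveOn_Ici_comp_add hu.2 hs0⟩
    refine (hH.eq_of_mapClusterPt hf hirr hu hshift ?_ hpX hsX hs).symm
    exact (hH.apply_eq_of_isSolOn hf.isOpen hu (by simpa)).symm
  exact (uniqueDiffWithinAt_Ici 0).eq_deriv _ hP
    ((hasDerivWithinAt_const 0 (Ici 0) _).congr_of_eventuallyEq hconst rfl)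

end IsPositiveFirstIntegral

end FirstIntegral

section LevelSets

lemma isPreconnected_of_isPreconnected_image {α β : Type*} [TopologicalSpace α] [TopologicalSpace β]
    [T2Space β] {K : Set α} {g : α → β} (hK : IsCompact K) (hg : ContinuousOn g K)
    (hinj : InjOn g K) (himage : IsPreconnected (g '' K)) : IsPreconnected K := by
  have : CompactSpace K := isCompact_iff_compactSpace.1 hK
  have hpre := himage.preimage_of_isClosedMap hinj.injective hg.domRestrict.isClosedMap
    (range_domRestrict g K).ge
  rw [← range_domRestrict, preimage_range] at hpre
  simpa using hpre.image Subtype.val continuous_subtype_val.continuousOn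

variable {E : Type*} [AddCommGroup E] [Lattice E] [Module ℝ E]

/-- The affine two-parameter family joining `a` (at `(0, 0)`) to `b` (at `(1, 1)`) inside the order
interval `[a ⊓ b, a ⊔ b]`; it decreases in the first parameter and increases in the second. A level
set of a strictly monotone function meets it in a connected curve. -/
def latticeInterp (a b : E) (r : ℝ × ℝ) : E := a - r.1 • (a - b)⁺ + r.2 • (a - b)⁻

variable {a b : E} {r : ℝ × ℝ} {s t t' : ℝ}

lemma continuous_latticeInterp [TopologicalSpace E] [IsTopologicalAddGroup E] [ContinuousSMul ℝ E]
    (a b : E) : Continuous (latticeInterp a b) := by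
  unfold latticeInterp; fun_prop

lemma latticeInterp_zero_zero (a b : E) : latticeInterp a b (0, 0) = a := by simp [latticeInterp]

variable [IsOrderedAddMonoid E]

lemma latticeInterp_one_right (a b : E) (s : ℝ) :
    latticeInterp a b (s, 1) = b + (1 - s) • (a - b)⁺ := by
  have hneg : (a - b)⁻ = (a - b)⁺ - (a - b) :=
    eq_sub_of_add_eq (sub_eq_iff_eq_add'.1 (posPart_sub_negPart (a - b))).symm
  rw [latticeInterp, hneg]
  module

lemma latticeInterp_mem_Icc [IsOrderedModule ℝ E] (hr : r ∈ Icc 0 1) :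
    latticeInterp a b r ∈ Icc (a ⊓ b) (a ⊔ b) := by
  obtain ⟨⟨hs0, ht0⟩, hs1, ht1⟩ := hr
  constructor
  · calc a ⊓ b = a - (a - b)⁺ := inf_eq_sub_posPart_sub a b
      _ ≤ a - r.1 • (a - b)⁺ := by grw [smul_le_of_le_one_left (posPart_nonneg _) hs1]
      _ ≤ latticeInterp a b r := le_add_of_nonneg_right (smul_nonneg ht0 (negPart_nonneg _))
  · calc latticeInterp a b r ≤ a + r.2 • (a - b)⁻ := by
          unfold latticeInterp
          grw [sub_le_self a (smul_nonneg hs0 (posPart_nonneg (a - b)))]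
      _ ≤ a + (a - b)⁻ := by grw [smul_le_of_le_one_left (negPart_nonneg _) ht1]
      _ = a ⊔ b := by rw [sup_comm, sup_eq_add_posPart_sub, ← posPart_neg, neg_sub]

lemma latticeInterp_lt_latticeInterp_right [IsStrictOrderedModule ℝ E] (hab : ¬b ≤ a)
    (ht : t < t') : latticeInterp a b (s, t) < latticeInterp a b (s, t') := by
  have hneg : 0 < (a - b)⁻ := (negPart_nonneg _).lt_of_ne' (by simpa [negPart_eq_zero])
  exact add_lt_add_right (smul_lt_smul_of_pos_right ht hneg) _

variable [IsStrictOrderedModule ℝ E] [TopologicalSpace E] [IsTopologicalAddGroup E]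
  [ContinuousSMul ℝ E] {X : Set E} {H : E → ℝ} {c : ℝ}

lemma isPreconnected_setOf_latticeInterp (hX : OrdConnected X) (hXlat : IsSublattice X)
    (hHc : ContinuousOn H X) (hH : StrictMonoOn H X) (ha : a ∈ X) (hb : b ∈ X)
    (hHa : H a = c) (hHb : H b = c) (hab : ¬b ≤ a) :
    IsPreconnected {r ∈ Icc (0 : ℝ × ℝ) 1 | H (latticeInterp a b r) = c} := by
  have hmem : MapsTo (latticeInterp a b) (Icc 0 1) X := fun r hr ↦
    hX.out (hXlat.infClosed ha hb) (hXlat.supClosed ha hb) (latticeInterp_mem_Icc hr)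
  have hcont : ContinuousOn (fun r ↦ H (latticeInterp a b r)) (Icc 0 1) :=
    hHc.comp (continuous_latticeInterp a b).continuousOn hmem
  have hcompact : IsCompact {r ∈ Icc (0 : ℝ × ℝ) 1 | H (latticeInterp a b r) = c} :=
    isCompact_Icc.of_isClosed_subset
      (hcont.preimage_isClosed_of_isClosed isClosed_Icc isClosed_singleton) inter_subset_left
  have himage : Prod.fst '' {r ∈ Icc (0 : ℝ × ℝ) 1 | H (latticeInterp a b r) = c} = Icc 0 1 := by
    refine Subset.antisymm (image_subset_iff.2 fun r hr ↦ ⟨hr.1.1.1, hr.1.2.1⟩) fun s hs ↦ ?_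
    have hs_mem : MapsTo (Prod.mk s) (Icc (0 : ℝ) 1) (Icc (0 : ℝ × ℝ) 1) := fun t ht ↦
      ⟨⟨hs.1, ht.1⟩, ⟨hs.2, ht.2⟩⟩
    have hle : H (latticeInterp a b (s, 0)) ≤ c := by
      refine hHa ▸ hH.monotoneOn (hmem (hs_mem (by simp))) ha ?_
      simpa [latticeInterp] using smul_nonneg hs.1 (posPart_nonneg (a - b))
    have hge : c ≤ H (latticeInterp a b (s, 1)) := by
      refine hHb ▸ hH.monotoneOn hb (hmem (hs_mem (by simp))) ?_
      rw [latticeInterp_one_right]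
      exact le_add_of_nonneg_right (smul_nonneg (sub_nonneg.2 hs.2) (posPart_nonneg _))
    obtain ⟨t, ht, hHt⟩ := intermediate_value_Icc zero_le_one
      (hcont.comp (Continuous.prodMk_right s).continuousOn hs_mem) ⟨hle, hge⟩
    exact ⟨(s, t), ⟨hs_mem ht, hHt⟩, rfl⟩
  refine isPreconnected_of_isPreconnected_image hcompact continuousOn_fst ?_
    (himage ▸ isPreconnected_Icc)
  rintro ⟨s, t⟩ ⟨hr, hHr⟩ ⟨s', t'⟩ ⟨hr', hHr'⟩ rfl
  have hmono : StrictMonoOn (fun t ↦ H (latticeInterp a b (s, t)))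
      {t | (s, t) ∈ Icc (0 : ℝ × ℝ) 1} :=
    fun t ht t' ht' htt' ↦ hH (hmem ht) (hmem ht') (latticeInterp_lt_latticeInterp_right hab htt')
  rw [hmono.injOn hr hr' (hHr.trans hHr'.symm)]

theorem isPreconnected_levelSet (hX : OrdConnected X) (hXlat : IsSublattice X)
    (hHc : ContinuousOn H X) (hH : StrictMonoOn H X) (c : ℝ) :
    IsPreconnected {x ∈ X | H x = c} := by
  refine isPreconnected_of_forall_pair fun a ⟨ha, hHa⟩ b ⟨hb, hHb⟩ ↦ ?_
  rcases eq_or_ne a b with rfl | hne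
  · exact ⟨{a}, by simp [ha, hHa], rfl, rfl, isPreconnected_singleton⟩
  have hab : ¬b ≤ a := fun hle ↦ (hH hb ha (hle.lt_of_ne' hne)).ne (hHb.trans hHa.symm)
  refine ⟨_, ?_, ?_, ?_, (isPreconnected_setOf_latticeInterp hX hXlat hHc hH ha hb hHa hHb
    hab).image _ (continuous_latticeInterp a b).continuousOn⟩
  · rintro _ ⟨r, ⟨hr, hHr⟩, rfl⟩
    exact ⟨hX.out (hXlat.infClosed ha hb) (hXlat.supClosed ha hb) (latticeInterp_mem_Icc hr), hHr⟩
  · have ha0 := latticeInterp_zero_zero a b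
    exact ⟨(0, 0), ⟨left_mem_Icc.2 zero_le_one, by rw [ha0, hHa]⟩, ha0⟩
  · have hb1 : latticeInterp a b (1, 1) = b := by simp [latticeInterp_one_right]
    exact ⟨(1, 1), ⟨right_mem_Icc.2 zero_le_one, by rw [hb1, hHb]⟩, hb1⟩

end LevelSets

section Squeeze

variable {ι : Type*} {X U : Set (ι → ℝ)} {H : (ι → ℝ) → ℝ}
  {p q y : ι → ℝ} {ρ : ℝ}

lemma dist_le_of_le_or_le [Fintype ι] [DecidableEq ι] (hH : MonotoneOn H X) (hρ : 0 ≤ ρ)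
    (hp : p ∈ X) (hqp : q ≤ p ∨ p ≤ q)
    (hadd : ∀ i, q + Pi.single i ρ ∈ X ∧ H p < H (q + Pi.single i ρ))
    (hsub : ∀ i, q - Pi.single i ρ ∈ X ∧ H (q - Pi.single i ρ) < H p) : dist p q ≤ ρ := by
  refine (dist_pi_le_iff hρ).2 fun i ↦ abs_sub_le_iff.2 ⟨?_, ?_⟩ <;> by_contra! hi
  · have hle : q ≤ p := hqp.resolve_right fun h ↦ (hi.trans_le (sub_nonpos.2 (h i))).not_ge hρ
    refine (hadd i).2.not_ge (hH (hadd i).1 hp ?_)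
    rw [← le_sub_iff_add_le']
    exact update_le_iff.2 ⟨hi.le, fun j _ ↦ sub_nonneg.2 (hle j)⟩
  · have hle : p ≤ q := hqp.resolve_left fun h ↦ (hi.trans_le (sub_nonpos.2 (h i))).not_ge hρ
    refine (hsub i).2.not_ge (hH hp (hsub i).1 ?_)
    rw [le_sub_comm]
    exact update_le_iff.2 ⟨hi.le, fun j _ ↦ sub_nonneg.2 (hle j)⟩

lemma eventually_forall_comparable_mem [Finite ι] (hX : IsOpen X) (hHc : ContinuousOn H X)
    (hH : StrictMonoOn H X) (hy : y ∈ X) (hU : U ∈ 𝓝 y) :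
    ∀ᶠ r : (ι → ℝ) × ℝ in 𝓝 (y, H y),
      ∀ p ∈ X, H p = r.2 → (r.1 ≤ p ∨ p ≤ r.1) → p ∈ U := by
  classical
  cases nonempty_fintype ι
  obtain ⟨ε, hε, hball⟩ := Metric.nhds_basis_closedBall.mem_iff.1 (inter_mem hU (hX.mem_nhds hy))
  have hcont : ∀ {x}, x ∈ X → ContinuousAt H x := fun hx ↦ hHc.continuousAt (hX.mem_nhds hx)
  set ρ := ε / 2 with hρε
  have hρ : 0 < ρ := half_pos hε
  have hρX : ∀ i, y + Pi.single i ρ ∈ X ∧ y - Pi.single i ρ ∈ X := by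
    have hnorm : ∀ i, ‖(Pi.single i ρ : ι → ℝ)‖ ≤ ε := fun i ↦ by
      rw [Pi.norm_single, Real.norm_of_nonneg hρ.le]
      exact half_le_self hε.le
    exact fun i ↦ ⟨(hball (by simpa using hnorm i)).2, (hball (by simpa using hnorm i)).2⟩
  have hadd : ∀ i, ∀ᶠ r : (ι → ℝ) × ℝ in 𝓝 (y, H y),
      r.1 + Pi.single i ρ ∈ X ∧ r.2 < H (r.1 + Pi.single i ρ) := by
    intro i
    have hshift : ContinuousAt (fun r : (ι → ℝ) × ℝ ↦ r.1 + Pi.single i ρ) (y, H y) := by fun_prop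
    exact (hshift.eventually_mem (hX.mem_nhds (hρX i).1)).and (continuousAt_snd.eventually_lt
      (ContinuousAt.comp (g := H) (hcont (hρX i).1) hshift)
      (hH hy (hρX i).1 (lt_add_of_pos_right y (Pi.single_pos.2 hρ))))
  have hsub : ∀ i, ∀ᶠ r : (ι → ℝ) × ℝ in 𝓝 (y, H y),
      r.1 - Pi.single i ρ ∈ X ∧ H (r.1 - Pi.single i ρ) < r.2 := by
    intro i
    have hshift : ContinuousAt (fun r : (ι → ℝ) × ℝ ↦ r.1 - Pi.single i ρ) (y, H y) := by fun_prop
    exact (hshift.eventually_mem (hX.mem_nhds (hρX i).2)).and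
      ((ContinuousAt.comp (g := H) (x := (y, H y)) (hcont (hρX i).2) hshift).eventually_lt
      continuousAt_snd (hH (hρX i).2 hy (sub_lt_self y (Pi.single_pos.2 hρ))))
  filter_upwards [eventually_all.2 hadd, eventually_all.2 hsub,
    continuousAt_fst.eventually_mem (Metric.ball_mem_nhds y hρ)] with ⟨q, _⟩ hq_add hq_sub hqy p hp
      rfl hcomp
  refine (hball (Metric.mem_closedBall.2 ?_)).1
  calc dist p y ≤ dist p q + dist q y := dist_triangle p q y
    _ ≤ ε := by
      have hpq : dist p q ≤ ρ := dist_le_of_le_or_le hH.monotoneOn hρ.le hp hcomp hq_add hq_sub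
      have hqy : dist q y < ρ := hqy
      linarith

-- `q ≤ p ⊔ q` forces `p ⊔ q` to be near `y`, and then `p ≤ p ⊔ q` forces `p` to be near `y`.
lemma exists_forall_sup_lt_mem [Finite ι] (hX : IsOpen X) (hHc : ContinuousOn H X)
    (hH : StrictMonoOn H X) (hy : y ∈ X) (hU : U ∈ 𝓝 y) :
    ∃ m > H y, ∀ᶠ q in 𝓝 y, ∀ p ∈ X, H p = H y → p ⊔ q ∈ X → H (p ⊔ q) < m → p ∈ U := by
  have hU' : ∀ᶠ q' in 𝓝 y, ∀ p ∈ X, H p = H y → (q' ≤ p ∨ p ≤ q') → p ∈ U :=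
    (Continuous.prodMk_left (H y)).continuousAt.eventually
      (eventually_forall_comparable_mem hX hHc hH hy hU)
  have hUU := eventually_forall_comparable_mem hX hHc hH hy hU'
  rw [nhds_prod_eq] at hUU
  obtain ⟨Q, hQ, L, hL, hQL⟩ := eventually_prod_iff.1 hUU
  obtain ⟨m, hm, hmL⟩ := exists_Ico_subset_of_mem_nhds hL (exists_gt (H y))
  refine ⟨m, hm, hQ.mono fun q hq p hp hHp hpq hlt ↦ ?_⟩
  have hLpq : L (H (p ⊔ q)) := hmL ⟨hHp ▸ hH.monotoneOn hp hpq le_sup_left, hlt⟩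
  exact hQL hq hLpq (p ⊔ q) hpq rfl (.inl le_sup_right) p hp hHp (.inr le_sup_left)

end Squeeze

section Dichotomy

variable {n : ℕ} {X : Set (Fin n → ℝ)} {f : (Fin n → ℝ) → Fin n → ℝ} {H : (Fin n → ℝ) → ℝ}
  {u : ℝ → Fin n → ℝ} {x y z : Fin n → ℝ} {c : ℝ} {γ : (Fin n → ℝ) → ℝ → Fin n → ℝ}

lemma isSolOn_const (hy : y ∈ X) (hfy : f y = 0) (I : Set ℝ) : IsSolOn f X I fun _ ↦ y :=
  ⟨fun _ _ ↦ hy, fun t _ ↦ hfy ▸ hasDerivWithinAt_const t I y⟩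

lemma mapClusterPt_of_mem_omegaSet (hy : y ∈ omegaSet X u) : MapClusterPt y atTop u :=
  let ⟨_, _, ht, hty⟩ := hy
  hty.mapClusterPt.of_comp ht

namespace IsPositiveFirstIntegral

lemma eq_of_apply_eq_zero (hH : IsPositiveFirstIntegral H f X) (hf : IsCooperativeSystem f X)
    (hirr : ∀ x ∈ X, matIrred (jacMat f x)) (hy : y ∈ X) (hz : z ∈ X) (hyz : H y = H z)
    (hfy : f y = 0) (hfz : f z = 0) : y = z :=
  hH.eq_of_mapClusterPt hf hirr (isSolOn_const hy hfy _) (isSolOn_const hz hfz _) hyz hy hz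
    tendsto_const_nhds.mapClusterPt

lemma exists_forall_tendsto_of_apply_sup_lt (hH : IsPositiveFirstIntegral H f X)
    (hf : IsCooperativeSystem f X) (hirr : ∀ x ∈ X, matIrred (jacMat f x)) (hy : y ∈ X) :
    ∃ m > H y, ∀ u v, IsSolOn f X (Ici 0) u → IsSolOn f X (Ici 0) v → H (u 0) = H y →
      Tendsto v atTop (𝓝 y) → H (u 0 ⊔ v 0) < m → Tendsto u atTop (𝓝 y) := by
  obtain ⟨K, hK, hKX, hKc⟩ := local_compact_nhds (hf.isOpen.mem_nhds hy)
  obtain ⟨m, hm, hclose⟩ := exists_forall_sup_lt_mem hf.isOpen hH.differentiableOn.continuousOn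
    (hH.strictMonoOn hf.isOpen hf.ordConnected) hy hK
  refine ⟨m, hm, fun u v hu hv huy hvy hlt ↦ hKc.tendsto_nhds_of_unique_mapClusterPt ?_ ?_⟩
  · filter_upwards [eventually_ge_atTop 0, hvy.eventually hclose] with t ht hvt
    exact hvt (u t) (hu.1 t ht) ((hH.apply_eq_of_isSolOn hf.isOpen hu ht).trans huy)
      (hf.supClosed (hu.1 t ht) (hv.1 t ht))
      ((hH.antitoneOn_apply_sup hf hu hv self_mem_Ici ht ht).trans_lt hlt)
  · intro x hxK hx
    obtain ⟨U, hU, hUx⟩ := mapClusterPt_iff_ultrafilter.1 hx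
    refine hH.eq_of_mapClusterPt hf hirr hu hv ?_ (hKX hxK) hy
      (mapClusterPt_iff_ultrafilter.2 ⟨U, hU, hUx.prodMk_nhds (hvy.mono_left hU)⟩)
    exact huy.trans (hH.apply_eq_of_mapClusterPt hf.isOpen hv hy hvy.mapClusterPt)

lemma eventually_tendsto_iff (hH : IsPositiveFirstIntegral H f X)
    (hf : IsCooperativeSystem f X) (hirr : ∀ x ∈ X, matIrred (jacMat f x))
    (hγ : ∀ x ∈ X, H x = c → IsSolOn f X (Ici 0) (γ x) ∧ γ x 0 = x) (hy : y ∈ X) (hHy : H y = c)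
    (hx : x ∈ X) (hHx : H x = c) :
    ∀ᶠ z in 𝓝[{z ∈ X | H z = c}] x, Tendsto (γ x) atTop (𝓝 y) ↔ Tendsto (γ z) atTop (𝓝 y) := by
  obtain ⟨m, hm, hbasin⟩ := hH.exists_forall_tendsto_of_apply_sup_lt hf hirr hy
  have hcont : ContinuousAt (fun z ↦ H (x ⊔ z)) x :=
    ContinuousAt.comp (g := H) (by simpa using (hH.hasFDerivAt hf.isOpen hx).continuousAt)
      (continuous_const.sup continuous_id).continuousAt
  have hlt : ∀ᶠ z in 𝓝 x, H (x ⊔ z) < m :=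
    hcont.eventually_lt continuousAt_const (by simpa [hHx, ← hHy] using hm)
  filter_upwards [hlt.filter_mono nhdsWithin_le_nhds, self_mem_nhdsWithin] with z hz ⟨hzX, hHz⟩
  obtain ⟨hsolx, hγx⟩ := hγ x hx hHx
  obtain ⟨hsolz, hγz⟩ := hγ z hzX hHz
  exact ⟨fun hxy ↦ hbasin _ _ hsolz hsolx (by rw [hγz, hHz, hHy]) hxy (by rwa [hγx, hγz, sup_comm]),
    fun hzy ↦ hbasin _ _ hsolx hsolz (by rw [hγx, hHx, hHy]) hzy (by rwa [hγx, hγz])⟩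

lemma tendsto_of_apply_eq_zero (hH : IsPositiveFirstIntegral H f X)
    (hf : IsCooperativeSystem f X) (hirr : ∀ x ∈ X, matIrred (jacMat f x))
    (hconn : IsPreconnected {x ∈ X | H x = c})
    (hγ : ∀ x ∈ X, H x = c → IsSolOn f X (Ici 0) (γ x) ∧ γ x 0 = x) (hy : y ∈ X) (hHy : H y = c)
    (hfy : f y = 0) (hx : x ∈ X) (hHx : H x = c) : Tendsto (γ x) atTop (𝓝 y) := by
  obtain ⟨m, hm, hbasin⟩ := hH.exists_forall_tendsto_of_apply_sup_lt hf hirr hy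
  obtain ⟨hsoly, hγy⟩ := hγ y hy hHy
  have hyy : Tendsto (γ y) atTop (𝓝 y) := hbasin _ _ hsoly (isSolOn_const hy hfy _)
    (by rw [hγy]) tendsto_const_nhds (by simpa [hγy])
  refine (hconn.induction₂' (fun x z ↦ Tendsto (γ x) atTop (𝓝 y) ↔ Tendsto (γ z) atTop (𝓝 y))
    (fun x hx ↦ ?_) (fun _ _ _ _ _ _ ↦ Iff.trans) ⟨hy, hHy⟩ ⟨hx, hHx⟩).1 hyy
  exact (hH.eventually_tendsto_iff hf hirr hγ hy hHy hx.1 hx.2).mono fun z hz ↦ ⟨hz, hz.symm⟩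

lemma omegaSet_eq_empty (hH : IsPositiveFirstIntegral H f X) (hf : IsCooperativeSystem f X)
    (hirr : ∀ x ∈ X, matIrred (jacMat f x)) (hu : IsSolOn f X (Ici 0) u)
    (hzero : ∀ y ∈ X, H y = H (u 0) → f y ≠ 0) : omegaSet X u = ∅ := by
  refine eq_empty_of_forall_notMem fun y hy ↦ ?_
  have hcluster := mapClusterPt_of_mem_omegaSet hy
  exact hzero y hy.1 (hH.apply_eq_of_mapClusterPt hf.isOpen hu hy.1 hcluster)
    (hH.apply_eq_zero_of_mapClusterPt hf hirr hu hy.1 hcluster)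

end IsPositiveFirstIntegral

end Dichotomy

theorem stmt_11_general {n : ℕ} {X : Set (Fin n → ℝ)} (hX : IsOpen X) (hoc : orderConvex X)
    (hlat : ∀ x ∈ X, ∀ y ∈ X, x ⊔ y ∈ X ∧ x ⊓ y ∈ X)
    {f : (Fin n → ℝ) → (Fin n → ℝ)} (hf : DifferentiableOn ℝ f X) (hcoop : coopVF f X)
    (hirr : ∀ x ∈ X, matIrred (jacMat f x))
    {H : (Fin n → ℝ) → ℝ} (hH : DifferentiableOn ℝ H X)
    (hfi : ∀ x ∈ X, fderiv ℝ H x (f x) = 0)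
    (hgrad : ∀ x ∈ X, ∀ i, 0 < fderiv ℝ H x (Pi.single i 1))
    (c : ℝ) (γ : (Fin n → ℝ) → ℝ → (Fin n → ℝ))
    (hsol : ∀ x ∈ X, H x = c → IsSolOn f X (Set.Ici 0) (γ x) ∧ γ x 0 = x) :
    Xor
      (∃ y, y ∈ X ∧ H y = c ∧ f y = 0 ∧
        (∀ y', y' ∈ X → H y' = c → f y' = 0 → y' = y) ∧
        (∀ x, x ∈ X → H x = c → Tendsto (γ x) atTop (𝓝 y)))
      ((∀ y, y ∈ X → H y = c → f y ≠ 0) ∧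
        (∀ x, x ∈ X → H x = c → omegaSet X (γ x) = ∅)) := by
  have hord : OrdConnected X := ⟨fun x hx y hy z hz ↦ hoc x hx y hy (hz.1.trans hz.2) hz⟩
  have hsub : IsSublattice X :=
    ⟨fun x hx y hy ↦ (hlat x hx y hy).1, fun x hx y hy ↦ (hlat x hx y hy).2⟩
  have hcs : IsCooperativeSystem f X := ⟨hX, hord, hsub.supClosed, hf, hcoop⟩
  have hpos : IsPositiveFirstIntegral H f X := ⟨hH, hfi, hgrad⟩
  have hconn : IsPreconnected {x ∈ X | H x = c} :=
    isPreconnected_levelSet hord hsub hH.continuousOn (hpos.strictMonoOn hX hord) c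
  by_cases hex : ∃ y ∈ X, H y = c ∧ f y = 0
  · obtain ⟨y, hy, hHy, hfy⟩ := hex
    refine .inl ⟨⟨y, hy, hHy, hfy, fun y' hy' hHy' hfy' ↦ ?_, fun x hx hHx ↦ ?_⟩,
      fun hnone ↦ hnone.1 y hy hHy hfy⟩
    · exact hpos.eq_of_apply_eq_zero hcs hirr hy' hy (hHy'.trans hHy.symm) hfy' hfy
    · exact hpos.tendsto_of_apply_eq_zero hcs hirr hconn hsol hy hHy hfy hx hHx
  · push Not at hex
    refine .inr ⟨⟨hex, fun x hx hHx ↦ ?_⟩, fun ⟨y, hy, hHy, hfy, _⟩ ↦ hex y hy hHy hfy⟩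
    obtain ⟨hu, hx0⟩ := hsol x hx hHx
    exact hpos.omegaSet_eq_empty hcs hirr hu (by rwa [hx0, hHx])

/-- dichotomy on a level set on which all solutions are global:
either a unique equilibrium attracting everything, or no equilibrium and all
ω-limit sets empty. -/
theorem stmt_11 {n : ℕ} {X : Set (Fin n → ℝ)} (hX : IsOpen X) (hoc : orderConvex X)
    (hlat : ∀ x ∈ X, ∀ y ∈ X, x ⊔ y ∈ X ∧ x ⊓ y ∈ X)
    {f : (Fin n → ℝ) → (Fin n → ℝ)} (hf : ContDiffOn ℝ 1 f X) (hcoop : coopVF f X)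
    (hirr : ∀ x ∈ X, matIrred (jacMat f x))
    {H : (Fin n → ℝ) → ℝ} (hH : ContDiffOn ℝ 1 H X)
    (hfi : ∀ x ∈ X, fderiv ℝ H x (f x) = 0)
    (hgrad : ∀ x ∈ X, ∀ i, 0 < fderiv ℝ H x (Pi.single i 1))
    (c : ℝ) (γ : (Fin n → ℝ) → ℝ → (Fin n → ℝ))
    (hsol : ∀ x ∈ X, H x = c → IsSolOn f X (Set.Ici 0) (γ x) ∧ γ x 0 = x) :
    Xor'
      (∃ y, y ∈ X ∧ H y = c ∧ f y = 0 ∧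
        (∀ y', y' ∈ X → H y' = c → f y' = 0 → y' = y) ∧
        (∀ x, x ∈ X → H x = c → Tendsto (γ x) atTop (𝓝 y)))
      ((∀ y, y ∈ X → H y = c → f y ≠ 0) ∧
        (∀ x, x ∈ X → H x = c → omegaSet X (γ x) = ∅)) :=
  stmt_11_general hX hoc hlat (hf.differentiableOn one_ne_zero) hcoop hirr
    (hH.differentiableOn one_ne_zero) hfi hgrad c γ hsol
end
end

section
/- Let f : ℝⁿ → ℝⁿ be a C¹ cooperative irreducible vector field admitting a C¹ first integral H : ℝⁿ → ℝ such that for some constants 0 < m ≤ M one has m ≤ ∂H/∂xᵢ(x) ≤ M for all i and all x ∈ ℝⁿ. If γ : [0,b) → ℝⁿ is a solution of ẋ = f(x) with b < ∞, then the finite limit lim_{t→b⁻} γ(t) exists in ℝⁿ. Consequently, no maximal solution of ẋ = f(x) has finite forward escape time: every maximal solution is defined on all of [0,∞). -/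
open Set Filter Topology

noncomputable section

/-!
If `x` and `y` are solutions, cooperativity makes `x ⊔ y` a subsolution from the right, so
`H (x ⊔ y)` is nonincreasing for a first integral `H` increasing in each variable, while `H x` and
`H y` are constant. Hence `2 * H (x ⊔ y) - H x - H y` is nonincreasing. It dominates a multiple of
the distance of `x` and `y` when the partial derivatives of `H` are bounded below, and is
controlled by that distance at the initial time since `H` is differentiable there. So the forward
flow is Lipschitz in the initial value, uniformly in time. Comparing a solution with its own time
translates bounds its speed by a multiple of its initial speed; therefore it cannot leave in finite
time.
-/

/-! ### Continuation of solutions in Banach spaces -/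

section Continuation

variable {E : Type*} [NormedAddCommGroup E] [NormedSpace ℝ E] {f : E → E} {γ x y : ℝ → E}
  {a b c : ℝ}

lemma hasDerivWithinAt_Ici_of_isIntegralCurveOn_Icc {v : ℝ → E → E} {t : ℝ}
    (h : IsIntegralCurveOn γ v (Icc a b)) (ht : t ∈ Ico a b) :
    HasDerivWithinAt γ (v t (γ t)) (Ici t) t :=
  (h t (Ico_subset_Icc_self ht)).mono_of_mem_nhdsWithin <|
    mem_of_superset (Icc_mem_nhdsGE ht.2) (Icc_subset_Icc_left ht.1)

lemma firstIntegral_eq_of_isIntegralCurveOn {H : E → ℝ} (hH : Differentiable ℝ H)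
    (hfi : ∀ z, fderiv ℝ H z (f z) = 0) (hab : a ≤ b)
    (hx : IsIntegralCurveOn x (fun _ ↦ f) (Icc a b)) : H (x b) = H (x a) := by
  refine constant_of_has_deriv_right_zero (f := H ∘ x)
    (hH.continuous.comp_continuousOn hx.continuousOn) (fun t ht ↦ ?_) b (right_mem_Icc.mpr hab)
  rw [← hfi (x t)]
  exact (hH (x t)).hasFDerivAt.comp_hasDerivWithinAt t
    (hasDerivWithinAt_Ici_of_isIntegralCurveOn_Icc hx ht)

theorem eqOn_Icc_of_isIntegralCurveOn (hf : LocallyLipschitz f)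
    (hx : IsIntegralCurveOn x (fun _ ↦ f) (Icc a b))
    (hy : IsIntegralCurveOn y (fun _ ↦ f) (Icc a b)) (hxy : x a = y a) :
    EqOn x y (Icc a b) := by
  have hcompact : IsCompact (x '' Icc a b ∪ y '' Icc a b) :=
    (isCompact_Icc.image_of_continuousOn hx.continuousOn).union
      (isCompact_Icc.image_of_continuousOn hy.continuousOn)
  obtain ⟨K, hK⟩ := hf.locallyLipschitzOn.exists_lipschitzOnWith_of_compact hcompact
  exact ODE_solution_unique_of_mem_Icc_right (fun _ _ ↦ hK)
    hx.continuousOn (fun _ ↦ hasDerivWithinAt_Ici_of_isIntegralCurveOn_Icc hx)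
    (fun t ht ↦ .inl (mem_image_of_mem x (Ico_subset_Icc_self ht)))
    hy.continuousOn (fun _ ↦ hasDerivWithinAt_Ici_of_isIntegralCurveOn_Icc hy)
    (fun t ht ↦ .inr (mem_image_of_mem y (Ico_subset_Icc_self ht))) hxy

theorem exists_isIntegralCurveOn_Icc_of_locallyLipschitz [CompleteSpace E]
    (hf : LocallyLipschitz f) (x₀ : E) (a : ℝ) :
    ∃ b > a, ∃ γ : ℝ → E, γ a = x₀ ∧ IsIntegralCurveOn γ (fun _ ↦ f) (Icc a b) := by
  obtain ⟨K, s, hs, hK⟩ := hf x₀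
  obtain ⟨r, hr, hrs⟩ := Metric.nhds_basis_closedBall.mem_iff.mp hs
  set L : ℝ := ‖f x₀‖ + K * r + 1
  have hL0 : 0 < L := by positivity
  have hbound : ∀ y ∈ Metric.closedBall x₀ r, ‖f y‖ ≤ L := fun y hy ↦ calc
    ‖f y‖ ≤ ‖f x₀‖ + ‖f y - f x₀‖ := norm_le_norm_add_norm_sub' _ _
    _ ≤ ‖f x₀‖ + K * r := by
      gcongr
      exact (hK.norm_sub_le (hrs hy) (mem_of_mem_nhds hs)).trans
        (mul_le_mul_of_nonneg_left (mem_closedBall_iff_norm.mp hy) K.2)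
    _ ≤ L := le_add_of_nonneg_right zero_le_one
  have hab : a < a + r / L := lt_add_of_pos_right a (by positivity)
  have hPL : IsPicardLindelof (fun _ ↦ f) (⟨a, left_mem_Icc.mpr hab.le⟩ : Icc a (a + r / L))
      x₀ ⟨r, hr.le⟩ 0 ⟨L, hL0.le⟩ K := by
    refine .of_time_independent hbound (hK.mono hrs) ?_
    rw [add_sub_cancel_left, sub_self, max_eq_left (by positivity)]
    exact (sub_zero r).symm ▸ (mul_div_cancel₀ r hL0.ne').le
  obtain ⟨γ, hγ₀, hγ⟩ := hPL.exists_eq_forall_mem_Icc_hasDerivWithinAt₀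
  exact ⟨a + r / L, hab, γ, hγ₀, hγ⟩

theorem isIntegralCurveOn_update_of_tendsto {L : E} (hf : ContinuousAt f L) (hab : a < b)
    (hγ : IsIntegralCurveOn γ (fun _ ↦ f) (Ico a b)) (hL : Tendsto γ (𝓝[<] b) (𝓝 L)) :
    IsIntegralCurveOn (Function.update γ b L) (fun _ ↦ f) (Icc a b) := by
  intro t ht
  rcases ht.2.lt_or_eq with htb | rfl
  · have hderiv : HasDerivWithinAt γ (f (γ t)) (Icc a b) t :=
      (hγ t ⟨ht.1, htb⟩).mono_of_mem_nhdsWithin <| by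
        filter_upwards [self_mem_nhdsWithin, mem_nhdsWithin_of_mem_nhds (Iio_mem_nhds htb)]
          with s hs hsb using ⟨hs.1, hsb⟩
    have heq : Function.update γ b L =ᶠ[𝓝 t] γ := by
      filter_upwards [Iio_mem_nhds htb] with s hs using Function.update_of_ne hs.ne _ _
    rw [heq.eq_of_nhds]
    exact hderiv.congr_of_eventuallyEq (heq.filter_mono nhdsWithin_le_nhds) heq.eq_of_nhds
  · have hderiv : ∀ s ∈ Ioo a t, HasDerivAt (Function.update γ t L) (f (γ s)) s := fun s hs ↦
      ((hγ s (Ioo_subset_Ico_self hs)).hasDerivAt (Ico_mem_nhds hs.1 hs.2)).congr_of_eventuallyEq <|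
        by filter_upwards [Iio_mem_nhds hs.2] with r hr using Function.update_of_ne hr.ne _ _
    rw [Function.update_self]
    refine (hasDerivWithinAt_Iic_of_tendsto_deriv
      (fun s hs ↦ (hderiv s hs).differentiableAt.differentiableWithinAt) ?_
      (Ioo_mem_nhdsLT hab) ?_).mono Icc_subset_Iic_self
    · exact continuousWithinAt_update_same.mpr <| hL.mono_left <|
        nhdsWithin_mono _ fun s hs ↦ hs.1.2
    · refine (hf.tendsto.comp hL).congr' ?_
      filter_upwards [Ioo_mem_nhdsLT hab] with s hs using (hderiv s hs).deriv.symm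

lemma isIntegralCurveOn_congr {v : ℝ → E → E} {s : Set ℝ} (hxy : EqOn x y s)
    (hy : IsIntegralCurveOn y v s) : IsIntegralCurveOn x v s := fun t ht ↦
  hxy ht ▸ (hy t ht).congr hxy (hxy ht)

lemma isIntegralCurveOn_union_of_isClosed {v : ℝ → E → E} {s t : Set ℝ} (hs : IsClosed s)
    (ht : IsClosed t) (hγs : IsIntegralCurveOn γ v s) (hγt : IsIntegralCurveOn γ v t) :
    IsIntegralCurveOn γ v (s ∪ t) := by
  have hderiv : ∀ {I : Set ℝ}, IsClosed I → IsIntegralCurveOn γ v I →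
      ∀ r, HasDerivWithinAt γ (v r (γ r)) I r := fun {I} hI hγ r ↦ by
    by_cases hr : r ∈ I
    · exact hγ r hr
    · exact HasFDerivWithinAt.of_notMem_closure (by rwa [hI.closure_eq])
  exact fun r _ ↦ (hderiv hs hγs r).union (hderiv ht hγt r)

theorem isIntegralCurveOn_piecewise_Iic {v : ℝ → E → E} (hab : a ≤ b) (hbc : b ≤ c)
    (hx : IsIntegralCurveOn x v (Icc a b)) (hy : IsIntegralCurveOn y v (Icc b c))
    (hxy : x b = y b) :
    IsIntegralCurveOn ((Iic b).piecewise x y) v (Icc a c) := by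
  have hleft : EqOn ((Iic b).piecewise x y) x (Icc a b) := fun t ht ↦ piecewise_eq_of_mem _ _ _ ht.2
  have hright : EqOn ((Iic b).piecewise x y) y (Icc b c) := by
    intro t ht
    rcases ht.1.eq_or_lt with rfl | hbt
    · rw [piecewise_eq_of_mem _ _ _ self_mem_Iic, hxy]
    · exact piecewise_eq_of_notMem _ _ _ hbt.not_ge
  rw [← Icc_union_Icc_eq_Icc hab hbc]
  exact isIntegralCurveOn_union_of_isClosed isClosed_Icc isClosed_Icc
    (isIntegralCurveOn_congr hleft hx) (isIntegralCurveOn_congr hright hy)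

theorem exists_isIntegralCurveOn_Icc_of_tendsto [CompleteSpace E] (hf : LocallyLipschitz f)
    (hab : a < b) (hγ : IsIntegralCurveOn γ (fun _ ↦ f) (Ico a b)) {L : E}
    (hL : Tendsto γ (𝓝[<] b) (𝓝 L)) :
    ∃ c > b, ∃ η : ℝ → E, η a = γ a ∧ IsIntegralCurveOn η (fun _ ↦ f) (Icc a c) := by
  obtain ⟨c, hbc, δ, hδL, hδ⟩ := exists_isIntegralCurveOn_Icc_of_locallyLipschitz hf L b
  refine ⟨c, hbc, (Iic b).piecewise (Function.update γ b L) δ, ?_,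
    isIntegralCurveOn_piecewise_Iic hab.le hbc.le
      (isIntegralCurveOn_update_of_tendsto hf.continuous.continuousAt hab hγ hL) hδ ?_⟩
  · rw [piecewise_eq_of_mem _ _ _ (mem_Iic.mpr hab.le), Function.update_of_ne hab.ne]
  · rw [Function.update_self, hδL]

theorem exists_isIntegralCurveOn_of_forall_mem (hf : LocallyLipschitz f) {x₀ : E} {I : Set ℝ}
    (h : ∀ t ∈ I, ∃ T, Icc a T ∈ 𝓝[I] t ∧
      ∃ γ : ℝ → E, γ a = x₀ ∧ IsIntegralCurveOn γ (fun _ ↦ f) (Icc a T)) :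
    ∃ γ : ℝ → E, (a ∈ I → γ a = x₀) ∧ IsIntegralCurveOn γ (fun _ ↦ f) I := by
  choose! T hT γ hγ₀ hγ using h
  have hagree : ∀ t ∈ I, ∀ s ∈ I, s ∈ Icc a (T t) → γ s s = γ t s := fun t ht s hs hst ↦ by
    have hss : s ∈ Icc a (T s) := mem_of_mem_nhdsWithin hs (hT s hs)
    exact eqOn_Icc_of_isIntegralCurveOn hf ((hγ s hs).mono (Icc_subset_Icc_right hss.2))
      ((hγ t ht).mono (Icc_subset_Icc_right hst.2)) ((hγ₀ s hs).trans (hγ₀ t ht).symm)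
      (right_mem_Icc.mpr hst.1)
  refine ⟨fun t ↦ γ t t, hγ₀ a, fun t ht ↦ ?_⟩
  refine ((hγ t ht t (mem_of_mem_nhdsWithin ht (hT t ht))).mono_of_mem_nhdsWithin
    (hT t ht)).congr_of_eventuallyEq ?_ rfl
  filter_upwards [self_mem_nhdsWithin, hT t ht] with s hs hst using hagree t ht s hs hst

theorem exists_isIntegralCurveOn_Ici_of_exists_tendsto [CompleteSpace E]
    (hf : LocallyLipschitz f) {x₀ : E}
    (h : ∀ b > a, ∀ γ : ℝ → E, γ a = x₀ → IsIntegralCurveOn γ (fun _ ↦ f) (Ico a b) →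
      ∃ L, Tendsto γ (𝓝[<] b) (𝓝 L)) :
    ∃ γ : ℝ → E, γ a = x₀ ∧ IsIntegralCurveOn γ (fun _ ↦ f) (Ici a) := by
  set S : Set ℝ := {T | a < T ∧ ∃ γ : ℝ → E, γ a = x₀ ∧ IsIntegralCurveOn γ (fun _ ↦ f) (Icc a T)}
  have hglue : ∀ I ⊆ Ici a, a ∈ I → (∀ t ∈ I, ∃ T ∈ S, t < T) →
      ∃ γ : ℝ → E, γ a = x₀ ∧ IsIntegralCurveOn γ (fun _ ↦ f) I := by
    intro I hI ha hS
    obtain ⟨γ, hγ₀, hγ⟩ := exists_isIntegralCurveOn_of_forall_mem (x₀ := x₀) hf fun t ht ↦ by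
      obtain ⟨T, hT, htT⟩ := hS t ht
      refine ⟨T, ?_, hT.2⟩
      filter_upwards [self_mem_nhdsWithin, mem_nhdsWithin_of_mem_nhds (Iic_mem_nhds htT)]
        with s hs hsT using ⟨hI hs, hsT⟩
    exact ⟨γ, hγ₀ ha, hγ⟩
  have hunbdd : ¬BddAbove S := by
    intro hbdd
    obtain ⟨T, haT, hT⟩ := exists_isIntegralCurveOn_Icc_of_locallyLipschitz hf x₀ a
    have hTS : T ∈ S := ⟨haT, hT⟩
    have hab : a < sSup S := haT.trans_le (le_csSup hbdd hTS)
    obtain ⟨γ, hγ₀, hγ⟩ := hglue (Ico a (sSup S)) (fun t ht ↦ ht.1) (left_mem_Ico.mpr hab)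
      fun t ht ↦ exists_lt_of_lt_csSup ⟨T, hTS⟩ ht.2
    obtain ⟨L, hL⟩ := h _ hab γ hγ₀ hγ
    obtain ⟨c, hc, η, hη₀, hη⟩ := exists_isIntegralCurveOn_Icc_of_tendsto hf hab hγ hL
    exact (le_csSup hbdd ⟨hab.trans hc, η, hη₀.trans hγ₀, hη⟩).not_gt hc
  exact hglue (Ici a) subset_rfl self_mem_Ici fun t _ ↦ not_bddAbove_iff.mp hunbdd t

end Continuation

/-! ### Fields whose forward flow is Lipschitz uniformly in time -/

section ForwardLipschitz

variable {E : Type*} [NormedAddCommGroup E] [NormedSpace ℝ E] {f : E → E} {γ : ℝ → E} {b : ℝ}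

/-- Solutions of `ẋ = f(x)` depend on the initial value in a Lipschitz way at `x₀`, with a constant
that does not depend on the time elapsed. Solutions are compared as long as both exist. -/
def IsForwardLipschitzAt (f : E → E) (x₀ : E) : Prop :=
  ∃ C : ℝ, ∀ᶠ y₀ in 𝓝 x₀, ∀ T ≥ 0, ∀ x y : ℝ → E,
    IsIntegralCurveOn x (fun _ ↦ f) (Icc 0 T) → IsIntegralCurveOn y (fun _ ↦ f) (Icc 0 T) →
    x 0 = x₀ → y 0 = y₀ → dist (x T) (y T) ≤ C * dist x₀ y₀

lemma tendsto_dist_div_of_hasDerivWithinAt_Ici {γ' : E} {t : ℝ}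
    (h : HasDerivWithinAt γ γ' (Ici t) t) :
    Tendsto (fun s ↦ dist (γ t) (γ (t + s)) / s) (𝓝[>] 0) (𝓝 ‖γ'‖) := by
  have hslope : Tendsto (slope γ t) (𝓝[>] t) (𝓝 γ') :=
    (hasDerivWithinAt_iff_tendsto_slope' self_notMem_Ioi).mp h.Ioi_of_Ici
  have hshift : Tendsto (t + ·) (𝓝[>] 0) (𝓝[>] t) := by
    simpa only [Tendsto, add_zero] using (map_add_left_nhdsGT (c := t) (a := (0 : ℝ))).le
  refine (hslope.comp hshift).norm.congr' ?_
  filter_upwards [self_mem_nhdsWithin] with s (hs : 0 < s)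
  rw [Function.comp_apply, slope_def_module, add_sub_cancel_left, norm_smul, norm_inv,
    Real.norm_of_nonneg hs.le, ← dist_eq_norm, dist_comm, inv_mul_eq_div]

lemma isIntegralCurveOn_Icc_comp_add_right {s t : ℝ} (hs : 0 ≤ s) (hst : t + s < b)
    (hγ : IsIntegralCurveOn γ (fun _ ↦ f) (Ico 0 b)) :
    IsIntegralCurveOn (fun r ↦ γ (r + s)) (fun _ ↦ f) (Icc 0 t) :=
  (hγ.comp_add s).mono fun r hr ↦ mem_neg_vadd_set_iff.mpr
    ⟨add_nonneg hs hr.1, by rw [vadd_eq_add]; linarith [hr.2]⟩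

theorem IsForwardLipschitzAt.exists_norm_le (hγ₀ : IsForwardLipschitzAt f (γ 0))
    (hγ : IsIntegralCurveOn γ (fun _ ↦ f) (Ico 0 b)) :
    ∃ C, ∀ t ∈ Ico 0 b, ‖f (γ t)‖ ≤ C := by
  obtain ⟨C, hC⟩ := hγ₀
  refine ⟨C * ‖f (γ 0)‖, fun t ht ↦ ?_⟩
  have h0 : 0 ∈ Ico 0 b := ⟨le_rfl, ht.1.trans_lt ht.2⟩
  have hderiv : ∀ s ∈ Ico 0 b, HasDerivWithinAt γ (f (γ s)) (Ici s) s := fun s hs ↦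
    (hγ s hs).mono_of_mem_nhdsWithin <|
      mem_of_superset (Ico_mem_nhdsGE hs.2) (Ico_subset_Ico_left hs.1)
  have hcont : Tendsto γ (𝓝[>] 0) (𝓝 (γ 0)) :=
    ((hderiv 0 h0).continuousWithinAt.mono Ioi_subset_Ici_self).tendsto
  refine le_of_tendsto_of_tendsto (tendsto_dist_div_of_hasDerivWithinAt_Ici (hderiv t ht))
    ((tendsto_dist_div_of_hasDerivWithinAt_Ici (hderiv 0 h0)).const_mul C) ?_
  filter_upwards [hcont.eventually hC, self_mem_nhdsWithin,
    mem_nhdsWithin_of_mem_nhds (Iio_mem_nhds (sub_pos.mpr ht.2))] with s hsC (hs : 0 < s) hsb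
  have hdist : dist (γ t) (γ (t + s)) ≤ C * dist (γ 0) (γ s) :=
    hsC t ht.1 γ (fun r ↦ γ (r + s)) (hγ.mono (Icc_subset_Ico_right ht.2))
      (isIntegralCurveOn_Icc_comp_add_right hs.le (lt_sub_iff_add_lt'.mp hsb) hγ) rfl
      (congrArg γ (zero_add s))
  rw [zero_add, ← mul_div_assoc]
  gcongr

theorem IsForwardLipschitzAt.exists_tendsto [CompleteSpace E]
    (hγ₀ : IsForwardLipschitzAt f (γ 0)) (hb : 0 < b)
    (hγ : IsIntegralCurveOn γ (fun _ ↦ f) (Ico 0 b)) :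
    ∃ L, Tendsto γ (𝓝[<] b) (𝓝 L) := by
  obtain ⟨C, hC⟩ := hγ₀.exists_norm_le hγ
  have hlip : LipschitzOnWith C.toNNReal γ (Ico 0 b) :=
    (convex_Ico 0 b).lipschitzOnWith_of_nnnorm_hasDerivWithin_le hγ fun t ht ↦
      NNReal.le_toNNReal_of_coe_le (hC t ht)
  exact cauchy_map_iff_exists_tendsto.mp <| cauchy_nhds.mono nhdsWithin_le_nhds |>.map_of_le
    hlip.uniformContinuousOn (le_principal_iff.mpr (Ico_mem_nhdsLT hb))

end ForwardLipschitz

/-! ### Quasimonotone fields with an increasing first integral -/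

section Quasimonotone

variable {ι : Type*} {f : (ι → ℝ) → ι → ℝ} {x y : ℝ → ι → ℝ}

/-- The Müller–Kamke condition: each component `f i` is nondecreasing in the variables other than
`i`. For differentiable fields it is the integrated form of cooperativity. -/
def IsQuasimonotone (f : (ι → ℝ) → ι → ℝ) : Prop :=
  ∀ ⦃x y⦄, x ≤ y → ∀ i, x i = y i → f x i ≤ f y i

lemma exists_hasDerivWithinAt_max_s13 {u v : ℝ → ℝ} {u' v' t : ℝ}
    (hu : HasDerivWithinAt u u' (Ici t) t) (hv : HasDerivWithinAt v v' (Ici t) t) :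
    ∃ w, HasDerivWithinAt (fun s ↦ max (u s) (v s)) w (Ici t) t ∧
      ∀ c, (v t ≤ u t → u' ≤ c) → (u t ≤ v t → v' ≤ c) → w ≤ c := by
  rcases lt_trichotomy (u t) (v t) with huv | huv | hvu
  · refine ⟨v', hv.congr_of_eventuallyEq ?_ (max_eq_right huv.le), fun _ _ hc ↦ hc huv.le⟩
    filter_upwards [hu.continuousWithinAt.eventually_lt hv.continuousWithinAt huv] with s hs
      using max_eq_right hs.le
  · refine ⟨max u' v', ?_, fun _ hcu hcv ↦ max_le (hcu huv.ge) (hcv huv.le)⟩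
    rw [← hasDerivWithinAt_Ioi_iff_Ici, hasDerivWithinAt_iff_tendsto_slope' self_notMem_Ioi] at *
    refine (hu.max hv).congr' ?_
    filter_upwards [self_mem_nhdsWithin] with s (hs : t < s)
    simp only [slope_def_field, huv, max_self]
    rw [max_div_div_right (sub_pos.mpr hs).le, max_sub_sub_right]
  · refine ⟨u', hu.congr_of_eventuallyEq ?_ (max_eq_left hvu.le), fun _ hc _ ↦ hc hvu.le⟩
    filter_upwards [hv.continuousWithinAt.eventually_lt hu.continuousWithinAt hvu] with s hs
      using max_eq_left hs.le

theorem IsQuasimonotone.exists_hasDerivWithinAt_sup_le (hf : IsQuasimonotone f) {t : ℝ}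
    (hx : HasDerivWithinAt x (f (x t)) (Ici t) t) (hy : HasDerivWithinAt y (f (y t)) (Ici t) t) :
    ∃ w ≤ f (x t ⊔ y t), HasDerivWithinAt (fun s ↦ x s ⊔ y s) w (Ici t) t := by
  choose w hw hle using fun i ↦
    exists_hasDerivWithinAt_max_s13 (hasDerivWithinAt_pi.1 hx i) (hasDerivWithinAt_pi.1 hy i)
  exact ⟨w, fun i ↦ hle i _ (fun h ↦ hf le_sup_left i (sup_eq_left.mpr h).symm)
    fun h ↦ hf le_sup_right i (sup_eq_right.mpr h).symm, hasDerivWithinAt_pi.2 hw⟩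

variable [Fintype ι] {H : (ι → ℝ) → ℝ} {m T : ℝ}

lemma dist_left_sup_le_dist (p q : ι → ℝ) : dist p (p ⊔ q) ≤ dist p q := by
  refine (dist_pi_le_iff dist_nonneg).mpr fun i ↦ ?_
  calc
    dist (p i) ((p ⊔ q) i) = ‖p i ⊔ p i - q i ⊔ p i‖ := by
      rw [sup_idem, sup_comm (q i), dist_eq_norm, Pi.sup_apply]
    _ ≤ ‖p i - q i‖ := norm_sup_sub_sup_le_norm _ _ _
    _ ≤ dist p q := dist_eq_norm (p i) (q i) ▸ dist_le_pi_dist p q i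

lemma exists_two_mul_sup_sub_le_mul_dist {p : ι → ℝ} (hH : DifferentiableAt ℝ H p) :
    ∃ K, ∀ᶠ q in 𝓝 p, 2 * H (p ⊔ q) - H p - H q ≤ K * dist p q := by
  obtain ⟨K, hK0, hK⟩ := hH.isBigO_sub.exists_nonneg
  have hsup : Tendsto (fun q ↦ p ⊔ q) (𝓝 p) (𝓝 p) := by
    refine tendsto_iff_dist_tendsto_zero.mpr (squeeze_zero (fun _ ↦ dist_nonneg) (fun q ↦ ?_)
      (tendsto_iff_dist_tendsto_zero.mp tendsto_id))
    rw [dist_comm, id, dist_comm q]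
    exact dist_left_sup_le_dist p q
  -- The left-hand side is `2 * (H (p ⊔ q) - H p) - (H q - H p)`.
  refine ⟨3 * K, ?_⟩
  filter_upwards [hK.bound, hsup.eventually hK.bound] with q hq hpq
  rw [← dist_eq_norm, ← dist_eq_norm, dist_comm q, Real.dist_eq, abs_le] at hq
  rw [← dist_eq_norm, ← dist_eq_norm, dist_comm (p ⊔ q), Real.dist_eq, abs_le] at hpq
  have := mul_le_mul_of_nonneg_left (dist_left_sup_le_dist p q) hK0
  linarith

variable [DecidableEq ι]

lemma clm_pi_apply_eq_sum_single (l : (ι → ℝ) →L[ℝ] ℝ) (v : ι → ℝ) :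
    l v = ∑ i, v i * l (Pi.single i 1) := by
  conv_lhs => rw [pi_eq_sum_univ' v]
  simp only [map_sum, map_smul, smul_eq_mul]

lemma mul_norm_le_apply_of_le_apply_single {l : (ι → ℝ) →L[ℝ] ℝ} (hm : 0 ≤ m)
    (hl : ∀ i, m ≤ l (Pi.single i 1)) {v : ι → ℝ} (hv : 0 ≤ v) : m * ‖v‖ ≤ l v := by
  have hnorm : ‖v‖ ≤ ∑ i, v i :=
    (pi_norm_le_iff_of_nonneg (Finset.sum_nonneg fun i _ ↦ hv i)).mpr fun i ↦ by
      rw [Real.norm_of_nonneg (hv i)]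
      exact Finset.single_le_sum (fun j _ ↦ hv j) (Finset.mem_univ i)
  calc
    m * ‖v‖ ≤ m * ∑ i, v i := by gcongr
    _ = ∑ i, v i * m := by rw [← Finset.sum_mul, mul_comm]
    _ ≤ ∑ i, v i * l (Pi.single i 1) := by gcongr with i; exacts [hv i, hl i]
    _ = l v := (clm_pi_apply_eq_sum_single l v).symm

lemma mul_dist_le_sub_of_le (hH : Differentiable ℝ H) (hm : 0 ≤ m)
    (hg : ∀ z i, m ≤ fderiv ℝ H z (Pi.single i 1)) {p q : ι → ℝ} (hpq : p ≤ q) :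
    m * dist p q ≤ H q - H p := by
  obtain ⟨z, -, hz⟩ := domain_mvt (fun z _ ↦ (hH z).hasFDerivAt.hasFDerivWithinAt) convex_univ
    (mem_univ p) (mem_univ q)
  rw [hz, dist_comm, dist_eq_norm]
  exact mul_norm_le_apply_of_le_apply_single hm (hg z) (sub_nonneg.mpr hpq)

lemma mul_dist_le_two_mul_sup_sub (hH : Differentiable ℝ H) (hm : 0 ≤ m)
    (hg : ∀ z i, m ≤ fderiv ℝ H z (Pi.single i 1)) (p q : ι → ℝ) :
    m * dist p q ≤ 2 * H (p ⊔ q) - H p - H q := by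
  have htri := mul_le_mul_of_nonneg_left (dist_triangle_right p q (p ⊔ q)) hm
  have hp := mul_dist_le_sub_of_le hH hm hg (le_sup_left : p ≤ p ⊔ q)
  have hq := mul_dist_le_sub_of_le hH hm hg (le_sup_right : q ≤ p ⊔ q)
  linarith

theorem IsQuasimonotone.apply_sup_le (hf : IsQuasimonotone f) (hH : Differentiable ℝ H)
    (hfi : ∀ z, fderiv ℝ H z (f z) = 0) (hg : ∀ z i, 0 ≤ fderiv ℝ H z (Pi.single i 1))
    (hT : 0 ≤ T) (hx : IsIntegralCurveOn x (fun _ ↦ f) (Icc 0 T))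
    (hy : IsIntegralCurveOn y (fun _ ↦ f) (Icc 0 T)) :
    H (x T ⊔ y T) ≤ H (x 0 ⊔ y 0) := by
  have hderiv : ∀ t ∈ Ico 0 T, ∃ w ≤ 0, HasDerivWithinAt (fun s ↦ H (x s ⊔ y s)) w (Ici t) t := by
    intro t ht
    obtain ⟨w, hw, hwd⟩ := hf.exists_hasDerivWithinAt_sup_le
      (hasDerivWithinAt_Ici_of_isIntegralCurveOn_Icc hx ht)
      (hasDerivWithinAt_Ici_of_isIntegralCurveOn_Icc hy ht)
    refine ⟨_, ?_, (hH (x t ⊔ y t)).hasFDerivAt.comp_hasDerivWithinAt t hwd⟩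
    have := mul_norm_le_apply_of_le_apply_single le_rfl (hg (x t ⊔ y t)) (sub_nonneg.mpr hw)
    rwa [zero_mul, map_sub, hfi, zero_sub, neg_nonneg] at this
  choose! w hw hwd using hderiv
  have hcont : ContinuousOn (fun s ↦ H (x s ⊔ y s)) (Icc 0 T) :=
    hH.continuous.comp_continuousOn (continuousOn_pi.mpr fun i ↦
      (continuousOn_pi.mp hx.continuousOn i).sup (continuousOn_pi.mp hy.continuousOn i))
  exact image_le_of_deriv_right_le_deriv_boundary hcont hwd le_rfl continuousOn_const
    (fun t _ ↦ hasDerivWithinAt_const t (Ici t) _) hw (right_mem_Icc.mpr hT)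

theorem IsQuasimonotone.isForwardLipschitzAt (hf : IsQuasimonotone f) (hH : Differentiable ℝ H)
    (hfi : ∀ z, fderiv ℝ H z (f z) = 0) (hm : 0 < m)
    (hg : ∀ z i, m ≤ fderiv ℝ H z (Pi.single i 1)) (x₀ : ι → ℝ) :
    IsForwardLipschitzAt f x₀ := by
  obtain ⟨K, hK⟩ := exists_two_mul_sup_sub_le_mul_dist (hH x₀)
  refine ⟨K / m, hK.mono ?_⟩
  rintro y₀ hy₀ T hT x y hx hy rfl rfl
  rw [div_mul_eq_mul_div, le_div_iff₀' hm]
  calc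
    m * dist (x T) (y T) ≤ 2 * H (x T ⊔ y T) - H (x T) - H (y T) :=
      mul_dist_le_two_mul_sup_sub hH hm.le hg _ _
    _ ≤ 2 * H (x 0 ⊔ y 0) - H (x 0) - H (y 0) := by
      rw [firstIntegral_eq_of_isIntegralCurveOn hH hfi hT hx,
        firstIntegral_eq_of_isIntegralCurveOn hH hfi hT hy]
      gcongr
      exact hf.apply_sup_le hH hfi (fun z i ↦ hm.le.trans (hg z i)) hT hx hy
    _ ≤ K * dist (x 0) (y 0) := hy₀

theorem stmt_13_general (hf : LocallyLipschitz f) (hqm : IsQuasimonotone f)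
    (hH : Differentiable ℝ H) (hfi : ∀ z, fderiv ℝ H z (f z) = 0) (hm : 0 < m)
    (hg : ∀ z i, m ≤ fderiv ℝ H z (Pi.single i 1)) :
    (∀ b : ℝ, 0 < b → ∀ γ : ℝ → ι → ℝ, IsIntegralCurveOn γ (fun _ ↦ f) (Ico 0 b) →
      ∃ L : ι → ℝ, Tendsto γ (𝓝[<] b) (𝓝 L)) ∧
    (∀ x, ∃ γ : ℝ → ι → ℝ, IsIntegralCurveOn γ (fun _ ↦ f) (Ici 0) ∧ γ 0 = x) := by
  have hlim : ∀ b : ℝ, 0 < b → ∀ γ : ℝ → ι → ℝ, IsIntegralCurveOn γ (fun _ ↦ f) (Ico 0 b) →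
      ∃ L : ι → ℝ, Tendsto γ (𝓝[<] b) (𝓝 L) := fun b hb γ hγ ↦
    (hqm.isForwardLipschitzAt hH hfi hm hg (γ 0)).exists_tendsto hb hγ
  refine ⟨hlim, fun x ↦ ?_⟩
  obtain ⟨γ, hγ₀, hγ⟩ :=
    exists_isIntegralCurveOn_Ici_of_exists_tendsto hf fun b hb γ (_ : γ 0 = x) ↦ hlim b hb γ
  exact ⟨γ, hγ, hγ₀⟩

end Quasimonotone

section Cooperative

variable {n : ℕ} {f : (Fin n → ℝ) → Fin n → ℝ}

theorem coopVF.isQuasimonotone (hcoop : coopVF f univ) (hf : Differentiable ℝ f) :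
    IsQuasimonotone f := by
  intro x y hxy i hi
  have hfi : ∀ z, HasFDerivAt (f · i) ((ContinuousLinearMap.proj i).comp (fderiv ℝ f z)) z :=
    fun z ↦ hasFDerivAt_pi'.mp (hf z).hasFDerivAt i
  obtain ⟨z, -, hz⟩ := domain_mvt (fun z _ ↦ (hfi z).hasFDerivWithinAt) convex_univ
    (mem_univ x) (mem_univ y)
  rw [← sub_nonneg, hz, clm_pi_apply_eq_sum_single]
  refine Finset.sum_nonneg fun j _ ↦ ?_
  rcases eq_or_ne i j with rfl | hij
  · rw [Pi.sub_apply, hi, sub_self, zero_mul]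
  · exact mul_nonneg (sub_nonneg.mpr (hxy j)) (hcoop z (mem_univ z) i j hij)

lemma isSolOn_univ {I : Set ℝ} {γ : ℝ → Fin n → ℝ} :
    IsSolOn f univ I γ ↔ IsIntegralCurveOn γ (fun _ ↦ f) I := by
  simp only [IsSolOn, IsIntegralCurveOn, mem_univ, implies_true, true_and]

end Cooperative

/-- no finite forward escape time: any solution on `[0,b)`, `b < ∞`,
has a finite limit as `t → b⁻`, and every initial value problem has a global
forward solution. -/
theorem stmt_13 {n : ℕ} {f : (Fin n → ℝ) → (Fin n → ℝ)} (hf : ContDiff ℝ 1 f)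
    (hcoop : coopVF f Set.univ) (hirr : ∀ x, matIrred (jacMat f x))
    {H : (Fin n → ℝ) → ℝ} (hH : ContDiff ℝ 1 H)
    (hfi : ∀ x, fderiv ℝ H x (f x) = 0)
    {m M : ℝ} (hm : 0 < m) (hmM : m ≤ M)
    (hg : ∀ x, ∀ i, m ≤ fderiv ℝ H x (Pi.single i 1) ∧
      fderiv ℝ H x (Pi.single i 1) ≤ M) :
    (∀ b : ℝ, 0 < b → ∀ γ : ℝ → Fin n → ℝ,
      IsSolOn f Set.univ (Set.Ico 0 b) γ →
        ∃ L : Fin n → ℝ, Tendsto γ (𝓝[<] b) (𝓝 L)) ∧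
    (∀ x, ∃ γ : ℝ → Fin n → ℝ, IsSolOn f Set.univ (Set.Ici 0) γ ∧ γ 0 = x) := by
  simpa only [isSolOn_univ] using
    stmt_13_general hf.locallyLipschitz (hcoop.isQuasimonotone (hf.differentiable one_ne_zero))
      (hH.differentiable one_ne_zero) hfi hm fun x i ↦ (hg x i).1
end
end

section
/- Let X ⊆ ℝⁿ be an open, order-convex set such that x ∨ y ∈ X for all x, y ∈ X (componentwise maximum), let f : X → ℝⁿ be a C¹ cooperative irreducible vector field, and let H : X → ℝ be a C¹ first integral for ẋ = f(x) with positive gradient. Then f has at most one zero in each level set of H: if y, y₁ ∈ X with f(y) = 0, f(y₁) = 0 and H(y) = H(y₁), then y = y₁. -/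
open Set Filter Topology

noncomputable section

/-!
The supremum `z = y ⊔ y₁` of two zeros satisfies `0 ≤ f z`: a cooperative field increases in its
`i`-th component along an increase of the argument that fixes the `i`-th coordinate. Since `∇H ≫ 0`
and `H` does not increase along `f`, this forces `f z = 0`. Irreducibility makes the comparable
zeros `y ≤ z` either equal or strictly ordered in every coordinate, that is, `z = y` or `z = y₁`.
So `y` and `y₁` are comparable, and `H` is strictly monotone.
-/

section PositiveFunctionals

variable {ι : Type*} [Finite ι] [DecidableEq ι] {L : (ι → ℝ) →ₗ[ℝ] ℝ} {v : ι → ℝ}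

theorem mul_map_single_le_map (hv : ∀ j, 0 ≤ v j * L (Pi.single j 1)) (i : ι) :
    v i * L (Pi.single i 1) ≤ L v := by
  have := Fintype.ofFinite ι
  have hsum : L v = ∑ j, v j * L (Pi.single j 1) := by
    conv_lhs => rw [pi_eq_sum_univ' v]
    simp only [map_sum, map_smul, smul_eq_mul]
  exact hsum ▸ Finset.single_le_sum (fun j _ => hv j) (Finset.mem_univ i)

theorem map_pos_of_map_single_pos (hL : ∀ i, 0 < L (Pi.single i 1)) (hv : 0 < v) : 0 < L v := by
  obtain ⟨hv₀, i, hi⟩ := Pi.lt_def.1 hv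
  exact (mul_pos hi (hL i)).trans_le
    (mul_map_single_le_map (fun j => mul_nonneg (hv₀ j) (hL j).le) i)

theorem lt_of_fderiv_single_pos {g : (ι → ℝ) → ℝ} {x y : ι → ℝ} (hxy : x < y)
    (hg : ∀ p ∈ segment ℝ x y, DifferentiableAt ℝ g p)
    (hpos : ∀ p ∈ segment ℝ x y, ∀ i, 0 < fderiv ℝ g p (Pi.single i 1)) : g x < g y := by
  have := Fintype.ofFinite ι
  obtain ⟨p, hp, hmvt⟩ := domain_mvt (fun p hp => (hg p hp).hasFDerivAt.hasFDerivWithinAt)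
    (convex_segment x y) (left_mem_segment ℝ x y) (right_mem_segment ℝ x y)
  have hderiv : 0 < fderiv ℝ g p (y - x) :=
    map_pos_of_map_single_pos (L := (fderiv ℝ g p).toLinearMap) (hpos p hp) (sub_pos.2 hxy)
  linarith

end PositiveFunctionals

section Convexity

variable {n : ℕ} {X : Set (Fin n → ℝ)}

theorem orderConvex.pconvex (hX : orderConvex X) : pconvex X := fun x hx y hy hxy =>
  (segment_subset_Icc hxy.le).trans (hX x hx y hy hxy.le)

theorem pconvex.segment_subset (hX : pconvex X) {x y : Fin n → ℝ} (hx : x ∈ X) (hy : y ∈ X)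
    (hxy : x ≤ y) : segment ℝ x y ⊆ X := by
  rcases hxy.eq_or_lt with rfl | hlt
  · simpa only [segment_same, singleton_subset_iff] using hx
  · exact hX x hx y hy hlt

end Convexity

namespace coopVF

variable {n : ℕ} {f : (Fin n → ℝ) → Fin n → ℝ} {X : Set (Fin n → ℝ)} {x y v : Fin n → ℝ}
  {i j : Fin n}

theorem mono {Y : Set (Fin n → ℝ)} (hf : coopVF f Y) (hXY : X ⊆ Y) : coopVF f X :=
  fun x hx => hf x (hXY hx)

theorem mul_jacMat_le_fderiv (hf : coopVF f X) (hx : x ∈ X) (hv : 0 ≤ v) (hvi : v i = 0)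
    (j : Fin n) : v j * jacMat f x i j ≤ fderiv ℝ f x v i := by
  refine mul_map_single_le_map (L := LinearMap.proj i ∘ₗ (fderiv ℝ f x).toLinearMap)
    (fun k => ?_) j
  rcases eq_or_ne i k with rfl | hik
  · rw [hvi, zero_mul]
  · exact mul_nonneg (hv k) (hf x hx i k hik)

theorem fderiv_apply_nonneg (hf : coopVF f X) (hx : x ∈ X) (hv : 0 ≤ v) (hvi : v i = 0) :
    0 ≤ fderiv ℝ f x v i := by
  simpa only [hvi, zero_mul] using hf.mul_jacMat_le_fderiv hx hv hvi i

theorem apply_le_apply (hf : coopVF f (segment ℝ x y))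
    (hdiff : ∀ p ∈ segment ℝ x y, DifferentiableAt ℝ f p) (hxy : x ≤ y) (hi : x i = y i) :
    f x i ≤ f y i := by
  obtain ⟨p, hp, hmvt⟩ := domain_mvt
    (fun p hp => (hasFDerivAt_pi'.1 (hdiff p hp).hasFDerivAt i).hasFDerivWithinAt)
    (convex_segment x y) (left_mem_segment ℝ x y) (right_mem_segment ℝ x y)
  have hderiv : 0 ≤ fderiv ℝ f p (y - x) i :=
    hf.fderiv_apply_nonneg hp (sub_nonneg.2 hxy) (sub_eq_zero.2 hi.symm)
  exact sub_nonneg.1 (hderiv.trans_eq hmvt.symm)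

theorem inf_le_map_sup (hf : coopVF f X) (hX : pconvex X) (hdiff : ∀ p ∈ X, DifferentiableAt ℝ f p)
    (hx : x ∈ X) (hy : y ∈ X) (hxy : x ⊔ y ∈ X) : f x ⊓ f y ≤ f (x ⊔ y) := by
  have hle {w : Fin n → ℝ} {i : Fin n} (hw : w ∈ X) (hwz : w ≤ x ⊔ y) (hi : w i = (x ⊔ y) i) :
      f w i ≤ f (x ⊔ y) i :=
    have hseg := hX.segment_subset hw hxy hwz
    (hf.mono hseg).apply_le_apply (fun p hp => hdiff p (hseg hp)) hwz hi
  intro i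
  rcases le_total (y i) (x i) with h | h
  · exact inf_le_left.trans (hle hx le_sup_left (sup_eq_left.2 h).symm)
  · exact inf_le_right.trans (hle hy le_sup_right (sup_eq_right.2 h).symm)

theorem fderiv_sub_apply_nonpos (hf : coopVF f (segment ℝ x y))
    (hdiff : ∀ p ∈ segment ℝ x y, DifferentiableAt ℝ f p) (hxy : x ≤ y) (hi : x i = y i)
    (hfi : f y i ≤ f x i) : fderiv ℝ f x (y - x) i ≤ 0 := by
  have hmax : IsMaxOn (fun p => f p i) (segment ℝ x y) x := fun p hp => by
    have hpIcc := segment_subset_Icc hxy hp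
    have hpi : p i = y i := le_antisymm (hpIcc.2 i) (hi ▸ hpIcc.1 i)
    have hseg : segment ℝ p y ⊆ segment ℝ x y :=
      (convex_segment x y).segment_subset hp (right_mem_segment ℝ x y)
    exact ((hf.mono hseg).apply_le_apply (fun q hq => hdiff q (hseg hq)) hpIcc.2 hpi).trans hfi
  have hderiv := hasFDerivAt_pi'.1 (hdiff x (left_mem_segment ℝ x y)).hasFDerivAt i
  exact hmax.localize.hasFDerivWithinAt_nonpos hderiv.hasFDerivWithinAt
    (sub_mem_posTangentConeAt_of_segment_subset subset_rfl)

theorem jacMat_eq_zero (hf : coopVF f (segment ℝ x y))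
    (hdiff : ∀ p ∈ segment ℝ x y, DifferentiableAt ℝ f p) (hxy : x ≤ y) (hi : x i = y i)
    (hfi : f y i ≤ f x i) (hj : x j < y j) : jacMat f x i j = 0 := by
  have hx := left_mem_segment ℝ x y
  have hij : i ≠ j := by
    rintro rfl
    exact hj.ne hi
  have hmul : (y - x) j * jacMat f x i j ≤ 0 :=
    (hf.mul_jacMat_le_fderiv hx (sub_nonneg.2 hxy) (sub_eq_zero.2 hi.symm) j).trans
      (hf.fderiv_sub_apply_nonpos hdiff hxy hi hfi)
  exact le_antisymm (nonpos_of_mul_nonpos_right hmul (sub_pos.2 hj)) (hf x hx i j hij)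

theorem strLt_of_lt (hf : coopVF f (segment ℝ x y))
    (hdiff : ∀ p ∈ segment ℝ x y, DifferentiableAt ℝ f p) (hirr : matIrred (jacMat f x))
    (hxy : x < y) (hfxy : f y ≤ f x) : strLt x y := by
  by_contra hnot
  obtain ⟨k, hk⟩ := not_forall.1 hnot
  have hk_eq : x k = y k := (hxy.le k).eq_of_not_lt hk
  have hne_univ : {i | x i = y i} ≠ Set.univ := fun h =>
    hxy.ne (funext (eq_univ_iff_forall.1 h))
  obtain ⟨i, hi, j, hj, hne⟩ := hirr {i | x i = y i} ⟨k, hk_eq⟩ hne_univ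
  exact hne (hf.jacMat_eq_zero hdiff hxy.le hi (hfxy i) ((hxy.le j).lt_of_ne hj))

end coopVF

theorem stmt_16_general {n : ℕ} {X : Set (Fin n → ℝ)} (hX : pconvex X) (hsup : SupClosed X)
    {f : (Fin n → ℝ) → (Fin n → ℝ)} (hf : ∀ x ∈ X, DifferentiableAt ℝ f x) (hcoop : coopVF f X)
    {H : (Fin n → ℝ) → ℝ} (hH : ∀ x ∈ X, DifferentiableAt ℝ H x)
    (hlyap : ∀ x ∈ X, fderiv ℝ H x (f x) ≤ 0)
    (hgrad : ∀ x ∈ X, ∀ i, 0 < fderiv ℝ H x (Pi.single i 1))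
    {y y₁ : Fin n → ℝ} (hy : y ∈ X) (hy₁ : y₁ ∈ X) (hirr : matIrred (jacMat f y))
    (hfy : f y = 0) (hfy₁ : f y₁ = 0) (hHeq : H y = H y₁) :
    y = y₁ := by
  have hz : y ⊔ y₁ ∈ X := hsup hy hy₁
  have hfz_nonneg : 0 ≤ f (y ⊔ y₁) := by
    simpa only [hfy, hfy₁, inf_idem] using hcoop.inf_le_map_sup hX hf hy hy₁ hz
  have hfz : f (y ⊔ y₁) = 0 := (hfz_nonneg.eq_of_not_lt fun hpos => (hlyap _ hz).not_gt <|
    map_pos_of_map_single_pos (L := (fderiv ℝ H (y ⊔ y₁)).toLinearMap) (hgrad _ hz) hpos).symm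
  have hH_strict : StrictMonoOn H X := fun a ha b hb hab =>
    lt_of_fderiv_single_pos hab (fun p hp => hH p (hX a ha b hb hab hp))
      fun p hp => hgrad p (hX a ha b hb hab hp)
  rcases (le_sup_left : y ≤ y ⊔ y₁).eq_or_lt with hyz | hyz
  · exact ((sup_eq_left.1 hyz.symm).eq_of_not_lt fun hlt =>
      (hH_strict hy₁ hy hlt).ne' hHeq).symm
  · have hseg := hX y hy _ hz hyz
    have hstrong : strLt y (y ⊔ y₁) := (hcoop.mono hseg).strLt_of_lt (fun p hp => hf p (hseg hp))
      hirr hyz (hfz.trans hfy.symm).le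
    have hle : y ≤ y₁ := fun i => ((lt_sup_iff.1 (hstrong i)).resolve_left (lt_irrefl _)).le
    exact hle.eq_of_not_lt fun hlt => (hH_strict hy hy₁ hlt).ne hHeq

/-- at most one equilibrium in each level set of the first integral. -/
theorem stmt_16 {n : ℕ} {X : Set (Fin n → ℝ)} (hX : IsOpen X) (hoc : orderConvex X)
    (hsup : ∀ x ∈ X, ∀ y ∈ X, x ⊔ y ∈ X)
    {f : (Fin n → ℝ) → (Fin n → ℝ)} (hf : ContDiffOn ℝ 1 f X) (hcoop : coopVF f X)
    (hirr : ∀ x ∈ X, matIrred (jacMat f x))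
    {H : (Fin n → ℝ) → ℝ} (hH : ContDiffOn ℝ 1 H X)
    (hfi : ∀ x ∈ X, fderiv ℝ H x (f x) = 0)
    (hgrad : ∀ x ∈ X, ∀ i, 0 < fderiv ℝ H x (Pi.single i 1))
    {y y₁ : Fin n → ℝ} (hy : y ∈ X) (hy₁ : y₁ ∈ X)
    (hfy : f y = 0) (hfy₁ : f y₁ = 0) (hHeq : H y = H y₁) :
    y = y₁ := by
  exact stmt_16_general hoc.pconvex (fun _ ha _ hb => hsup _ ha _ hb)
    (fun _ hx => (hf.differentiableOn one_ne_zero).differentiableAt (hX.mem_nhds hx)) hcoop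
    (fun _ hx => (hH.differentiableOn one_ne_zero).differentiableAt (hX.mem_nhds hx))
    (fun x hx => (hfi x hx).le) hgrad hy hy₁ (hirr y hy) hfy hfy₁ hHeq
end
end
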